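/- arXiv:1602.08705 — 4 statements merged into one kernel-verified Lean document; each statement's English description precedes it below -/
import Mathlib

section
/- Let H be a connected filtered Hopf algebra over a field k of characteristic zero and A a commutative unital k-algebra. Every character φ ∈ G(H,A) is the convolution exponential of some infinitesimal character: there exists σ ∈ g(H,A) with φ = exp_⋆(σ) = Σ_{n≥0} σ^{⋆n}/n!. -/
open scoped TensorProduct
noncomputable section

variable (k : Type*) [Field k] {H : Type*} [Ring H] [HopfAlgebra k H]
variable {A : Type*} [CommRing A] [Algebra k A]

/-- The convolution product on `Hom(H, A)`: `f ⋆ g = m_A ∘ (f ⊗ g) ∘ Δ`. -/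
def convA (f g : H →ₗ[k] A) : H →ₗ[k] A :=
  LinearMap.mul' k A ∘ₗ TensorProduct.map f g ∘ₗ Coalgebra.comul

/-- Convolution powers `σ^{⋆n}`, with `σ^{⋆0} = 1_A ε`. -/
def convAPow (σ : H →ₗ[k] A) : ℕ → (H →ₗ[k] A)
  | 0 => Algebra.linearMap k A ∘ₗ Coalgebra.counit
  | n + 1 => convA k σ (convAPow σ n)

/-- A character: a linear map `φ : H → A` with `φ(1) = 1_A` and
`φ(xy) = φ(x)φ(y)`. -/
def IsCharacter (φ : H →ₗ[k] A) : Prop :=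
  φ 1 = 1 ∧ ∀ x y : H, φ (x * y) = φ x * φ y

/-- An infinitesimal character: `σ(xy) = σ(x)ε(y) + ε(x)σ(y)`. -/
def IsInfChar (σ : H →ₗ[k] A) : Prop :=
  ∀ x y : H,
    σ (x * y) =
      σ x * algebraMap k A (Coalgebra.counit y) +
        algebraMap k A (Coalgebra.counit x) * σ y

/-!
Write `φ = 1 + ν`. On a connected coalgebra filtration `ν` is locally nilpotent, so the binomial
formula `φ^{⋆m} x = ∑ j, (m choose j) ν^{⋆j} x` exhibits `m ↦ φ^{⋆m} x` as the restriction to `ℕ`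
of a polynomial `P x`. The law `φ^{⋆(m+n)} = φ^{⋆m} ⋆ φ^{⋆n}` then makes `P` a one-parameter
group, whose coefficients `c n` satisfy `(m+n choose n) c (m+n) = c m ⋆ c n`. Hence
`c n = σ^{⋆n} / n!` with `σ = c 1`, and evaluating `P` at `1` gives `φ = exp_⋆ σ`. If `φ` is
multiplicative, so are its powers and therefore `P`; comparing linear coefficients in
`P (xy) = P x * P y` shows that `σ` is an infinitesimal character.
-/

open Filter Polynomial WithConv

section NatCastEval

variable {S : Type*} [CommRing S]

theorem polynomial_eq_zero_of_forall_eval_natCast_eq_zero [IsAddTorsionFree S] {p : S[X]}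
    (h : ∀ m : ℕ, p.eval (m : S) = 0) : p = 0 := by
  -- The forward difference of order `d = natDegree p` at `0` only sees values at naturals, hence
  -- vanishes, but it equals `d!` times the leading coefficient.
  have hdiff := congrFun p.fwdDiff_iter_degree_eq_factorial 0
  rw [fwdDiff_iter_eq_sum_shift] at hdiff
  simp only [nsmul_one, zero_add, h, smul_zero, Finset.sum_const_zero, Pi.smul_apply,
    Pi.natCast_apply, smul_eq_mul, ← nsmul_eq_mul'] at hdiff
  exact leadingCoeff_eq_zero.1
    ((smul_eq_zero.1 hdiff.symm).resolve_left p.natDegree.factorial_ne_zero)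

theorem polynomial_eq_of_forall_eval_natCast_eq [IsAddTorsionFree S] {p q : S[X]}
    (h : ∀ m : ℕ, p.eval (m : S) = q.eval (m : S)) : p = q :=
  sub_eq_zero.1 <| polynomial_eq_zero_of_forall_eval_natCast_eq_zero fun m => by
    rw [eval_sub, h, sub_self]

theorem exists_polynomial_eval_natCast_eq_choose [Algebra ℚ S] (j : ℕ) :
    ∃ b : S[X], ∀ m : ℕ, b.eval (m : S) = m.choose j := by
  refine ⟨(j.factorial : ℚ)⁻¹ • descPochhammer S j, fun m => ?_⟩
  rw [eval_smul, descPochhammer_eval_eq_descFactorial, Nat.descFactorial_eq_factorial_mul_choose,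
    Nat.cast_mul, ← nsmul_eq_mul, ← Nat.cast_smul_eq_nsmul ℚ,
    inv_smul_smul₀ (Nat.cast_ne_zero.2 j.factorial_ne_zero)]

end NatCastEval

section Interpolation

variable {R C S : Type*} [CommSemiring R] [AddCommMonoid C] [Module R C] [CommRing S] [Algebra R S]

/-- The map `x ↦ coeff (P x) n`, regarded as an element of the convolution algebra. -/
def convCoeff (P : C →ₗ[R] S[X]) (n : ℕ) : WithConv (C →ₗ[R] S) :=
  toConv ((lcoeff S n).restrictScalars R ∘ₗ P)

theorem convCoeff_apply (P : C →ₗ[R] S[X]) (n : ℕ) (x : C) : convCoeff P n x = (P x).coeff n :=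
  rfl

variable [Coalgebra R C]

/-- `P` interpolates the convolution powers of `f`: the value of `P x` at a natural number `m` is
`f^{⋆m} x`, so that `P x` evaluated at `t` plays the role of `f^{⋆t} x` for arbitrary `t`. -/
def IsConvPowInterpolation (f : WithConv (C →ₗ[R] S)) (P : C →ₗ[R] S[X]) : Prop :=
  ∀ (m : ℕ) (x : C), (P x).eval (m : S) = (f ^ m) x

theorem one_add_convPow_apply (ν : WithConv (C →ₗ[R] S)) (m : ℕ) (x : C) :
    ((1 + ν) ^ m) x = ∑ j ∈ Finset.range (m + 1), m.choose j * (ν ^ j) x := by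
  rw [add_comm, (Commute.one_right ν).add_pow, ofConv_sum, LinearMap.sum_apply]
  refine Finset.sum_congr rfl fun j _ => ?_
  rw [one_pow, mul_one, ← nsmul_eq_mul', ← nsmul_eq_mul]
  rfl

theorem exists_polynomial_eval_natCast_eq_one_add_convPow [Algebra ℚ S]
    {ν : WithConv (C →ₗ[R] S)} {x : C} (hν : ∀ᶠ n in atTop, (ν ^ n) x = 0) :
    ∃ p : S[X], ∀ m : ℕ, p.eval (m : S) = ((1 + ν) ^ m) x := by
  obtain ⟨N, hN⟩ := eventually_atTop.1 hν
  choose b hb using exists_polynomial_eval_natCast_eq_choose (S := S)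
  refine ⟨∑ j ∈ Finset.range N, (ν ^ j) x • b j, fun m => ?_⟩
  have hchoose (j : ℕ) (hj : j ∉ Finset.range (m + 1)) : (m.choose j : S) * (ν ^ j) x = 0 := by
    rw [Nat.choose_eq_zero_of_lt (by simpa using hj), Nat.cast_zero, zero_mul]
  have hnil (j : ℕ) (hj : j ∉ Finset.range N) : (m.choose j : S) * (ν ^ j) x = 0 := by
    rw [hN j (by simpa using hj), mul_zero]
  simp only [one_add_convPow_apply, eval_finsetSum, eval_smul, hb, smul_eq_mul,
    mul_comm ((ν ^ _) x)]
  exact (Finset.sum_subset Finset.subset_union_left fun j _ => hnil j).trans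
    (Finset.sum_subset Finset.subset_union_right fun j _ => hchoose j).symm

theorem exists_isConvPowInterpolation [Algebra ℚ S] {f : WithConv (C →ₗ[R] S)}
    (hf : ∀ x, ∀ᶠ n : ℕ in atTop, ((f - 1) ^ n) x = 0) :
    ∃ P : C →ₗ[R] S[X], IsConvPowInterpolation f P := by
  have : IsAddTorsionFree S := .of_module_rat S
  choose P hP using fun x => exists_polynomial_eval_natCast_eq_one_add_convPow (hf x)
  simp only [add_sub_cancel] at hP
  refine ⟨⟨⟨P, fun x y => ?_⟩, fun r x => ?_⟩, fun m x => hP x m⟩ <;>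
    refine polynomial_eq_of_forall_eval_natCast_eq fun m => ?_
  · rw [eval_add, hP, hP, hP, map_add]
  · rw [RingHom.id_apply, eval_smul, hP, hP, map_smul]

namespace IsConvPowInterpolation

variable {f : WithConv (C →ₗ[R] S)} {P : C →ₗ[R] S[X]}

theorem convCoeff_zero (hP : IsConvPowInterpolation f P) : convCoeff P 0 = 1 := by
  ext x
  simpa [convCoeff, coeff_zero_eq_eval_zero] using hP 0 x

section TorsionFree

variable [IsAddTorsionFree S]

theorem taylor_natCast_apply {ι : Type*} (hP : IsConvPowInterpolation f P) {x : C}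
    (𝓡 : Coalgebra.Repr R x ι) (m : ℕ) :
    taylor (m : S) (P x) = ∑ i ∈ 𝓡.index, (f ^ m) (𝓡.left i) • P (𝓡.right i) :=
  polynomial_eq_of_forall_eval_natCast_eq fun n => by
    simp only [taylor_eval, eval_finsetSum, eval_smul, smul_eq_mul, hP _ _]
    rw [← Nat.cast_add, hP, add_comm, pow_add, 𝓡.convMul_apply]

theorem hasseDeriv_apply {ι : Type*} (hP : IsConvPowInterpolation f P) {x : C}
    (𝓡 : Coalgebra.Repr R x ι) (n : ℕ) :
    hasseDeriv n (P x) = ∑ i ∈ 𝓡.index, convCoeff P n (𝓡.right i) • P (𝓡.left i) :=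
  polynomial_eq_of_forall_eval_natCast_eq fun m => by
    rw [← taylor_coeff, hP.taylor_natCast_apply 𝓡]
    simp only [finsetSum_coeff, coeff_smul, eval_finsetSum, eval_smul, smul_eq_mul, hP _ _,
      convCoeff_apply, mul_comm]

theorem convCoeff_mul_convCoeff (hP : IsConvPowInterpolation f P) (m n : ℕ) :
    convCoeff P m * convCoeff P n = (m + n).choose n • convCoeff P (m + n) := by
  ext x
  let 𝓡 := Coalgebra.Repr.arbitrary R x
  calc (convCoeff P m * convCoeff P n) x
      = (hasseDeriv n (P x)).coeff m := by
        simp only [𝓡.convMul_apply, hP.hasseDeriv_apply 𝓡, finsetSum_coeff, coeff_smul,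
          smul_eq_mul, convCoeff_apply, mul_comm]
    _ = (m + n).choose n • (P x).coeff (m + n) := by rw [hasseDeriv_coeff, nsmul_eq_mul]

theorem convCoeff_one_pow (hP : IsConvPowInterpolation f P) (n : ℕ) :
    convCoeff P 1 ^ n = n.factorial • convCoeff P n := by
  induction n with
  | zero => rw [pow_zero, Nat.factorial_zero, one_smul, hP.convCoeff_zero]
  | succ n ih =>
    rw [pow_succ, ih, smul_mul_assoc, hP.convCoeff_mul_convCoeff, Nat.choose_one_right, smul_smul,
      mul_comm, Nat.factorial_succ]

end TorsionFree

theorem eq_sum_inv_factorial_smul [Algebra ℚ S] (hP : IsConvPowInterpolation f P) {x : C} {n : ℕ}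
    (hn : (P x).natDegree < n) :
    f x = ∑ j ∈ Finset.range n, (j.factorial : ℚ)⁻¹ • (convCoeff P 1 ^ j) x := by
  have : IsAddTorsionFree S := .of_module_rat S
  have hcoeff (j : ℕ) : (j.factorial : ℚ)⁻¹ • (convCoeff P 1 ^ j) x = (P x).coeff j := by
    rw [hP.convCoeff_one_pow, inv_smul_eq_iff₀ (Nat.cast_ne_zero.2 j.factorial_ne_zero),
      Nat.cast_smul_eq_nsmul]
    rfl
  calc f x = (P x).eval 1 := by simpa using (hP 1 x).symm
    _ = ∑ j ∈ Finset.range n, (j.factorial : ℚ)⁻¹ • (convCoeff P 1 ^ j) x := by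
      simp only [eval_eq_sum_range' hn, one_pow, mul_one, hcoeff]

end IsConvPowInterpolation

end Interpolation

section CoalgebraFiltration

variable {R C S : Type*} [CommSemiring R] [AddCommMonoid C] [Module R C] [Coalgebra R C]
  [CommRing S] [Algebra R S]

/-- `F` is compatible with the comultiplication: `Δ(F n) ⊆ ∑_{p + q = n} F p ⊗ F q`, where
`F p ⊗ F q` stands for its image in `C ⊗ C`. -/
def IsComulFiltration (F : ℕ → Submodule R C) : Prop :=
  ∀ n, ∀ x ∈ F n, Coalgebra.comul (R := R) x ∈ (Finset.range (n + 1)).sup fun p =>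
    LinearMap.range (TensorProduct.map (F p).subtype (F (n - p)).subtype)

namespace IsComulFiltration

variable {F : ℕ → Submodule R C} {ν : WithConv (C →ₗ[R] S)}

theorem convMul_apply_eq_zero (hF : IsComulFiltration F) {μ : WithConv (C →ₗ[R] S)} {n : ℕ}
    (h : ∀ p ≤ n, ∀ a ∈ F p, ∀ b ∈ F (n - p), ν a * μ b = 0) {x : C} (hx : x ∈ F n) :
    (ν * μ) x = 0 := by
  suffices ((Finset.range (n + 1)).sup fun p =>
      LinearMap.range (TensorProduct.map (F p).subtype (F (n - p)).subtype)) ≤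
      LinearMap.ker (LinearMap.mul' R S ∘ₗ TensorProduct.map ν.ofConv μ.ofConv) from
    this (hF n x hx)
  refine Finset.sup_le fun p hp => LinearMap.range_le_ker_iff.2 (TensorProduct.ext' fun a b => ?_)
  exact h p (Nat.lt_succ_iff.1 (Finset.mem_range.1 hp)) a a.2 b b.2

theorem convPow_apply_eq_zero (hF : IsComulFiltration F) (hν : ∀ x ∈ F 0, ν x = 0) {m n : ℕ}
    (hmn : m < n) {x : C} (hx : x ∈ F m) : (ν ^ n) x = 0 := by
  induction n generalizing m x with
  | zero => exact absurd hmn m.not_lt_zero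
  | succ n ih =>
    rw [pow_succ']
    refine hF.convMul_apply_eq_zero (fun p hp a ha b hb => ?_) hx
    rcases p.eq_zero_or_pos with rfl | hp_pos
    · rw [hν a ha, zero_mul]
    · rw [ih (by omega) hb, mul_zero]

theorem eventually_convPow_apply_eq_zero (hF : IsComulFiltration F) (hexh : ⨆ n, F n = ⊤)
    (hν : ∀ x ∈ F 0, ν x = 0) (x : C) : ∀ᶠ n in atTop, (ν ^ n) x = 0 := by
  have hx : x ∈ ⨆ n, F n := hexh ▸ Submodule.mem_top
  induction hx using Submodule.iSup_induction' with
  | mem m x hx => exact (eventually_gt_atTop m).mono fun n hn => hF.convPow_apply_eq_zero hν hn hx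
  | zero => exact .of_forall fun n => map_zero _
  | add x y _ _ hx hy => filter_upwards [hx, hy] with n hx hy; rw [map_add, hx, hy, add_zero]

end IsComulFiltration

end CoalgebraFiltration

section Character

variable {R B S : Type*} [CommSemiring R] [Semiring B] [Bialgebra R B] [CommRing S] [Algebra R S]

theorem algHom_convPow_map_mul (φ : B →ₐ[R] S) (n : ℕ) (x y : B) :
    (toConv φ.toLinearMap ^ n) (x * y) =
      (toConv φ.toLinearMap ^ n) x * (toConv φ.toLinearMap ^ n) y := by
  rw [← AlgHom.toLinearMap_convPow (toConv φ)]
  exact map_mul (toConv φ ^ n).ofConv x y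

theorem algHom_sub_convOne_apply_eq_zero (φ : B →ₐ[R] S) {x : B}
    (hx : x ∈ Submodule.span R {(1 : B)}) : (toConv φ.toLinearMap - 1) x = 0 := by
  obtain ⟨r, rfl⟩ := Submodule.mem_span_singleton.1 hx
  simp

namespace IsConvPowInterpolation

variable {φ : B →ₐ[R] S} {P : B →ₗ[R] S[X]}

theorem map_mul_of_algHom [IsAddTorsionFree S]
    (hP : IsConvPowInterpolation (toConv φ.toLinearMap) P) (x y : B) : P (x * y) = P x * P y :=
  polynomial_eq_of_forall_eval_natCast_eq fun m => by
    rw [eval_mul, hP, hP, hP, algHom_convPow_map_mul]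

theorem convCoeff_one_mul_of_algHom [IsAddTorsionFree S]
    (hP : IsConvPowInterpolation (toConv φ.toLinearMap) P) (x y : B) :
    convCoeff P 1 (x * y) =
      convCoeff P 1 x * algebraMap R S (Coalgebra.counit y) +
        algebraMap R S (Coalgebra.counit x) * convCoeff P 1 y := by
  have hcoeff_zero (z : B) : (P z).coeff 0 = algebraMap R S (Coalgebra.counit z) := by
    rw [← convCoeff_apply, hP.convCoeff_zero, LinearMap.convOne_apply]
  rw [convCoeff_apply, hP.map_mul_of_algHom, mul_coeff_one, hcoeff_zero, hcoeff_zero, add_comm]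
  rfl

end IsConvPowInterpolation

theorem character_is_exp_of_infinitesimal_character_general [Algebra ℚ S] {F : ℕ → Submodule R B}
    (hexh : ⨆ n, F n = ⊤) (hF : IsComulFiltration F) (hconn : F 0 ≤ Submodule.span R {(1 : B)})
    (φ : B →ₐ[R] S) :
    ∃ σ : B →ₗ[R] S,
      (∀ x y : B, σ (x * y) =
        σ x * algebraMap R S (Coalgebra.counit y) + algebraMap R S (Coalgebra.counit x) * σ y) ∧
      ∀ x : B, ∃ N : ℕ, ∀ n : ℕ, N ≤ n →
        φ x = ∑ j ∈ Finset.range n, (j.factorial : ℚ)⁻¹ • (toConv σ ^ j) x := by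
  have : IsAddTorsionFree S := .of_module_rat S
  obtain ⟨P, hP⟩ := exists_isConvPowInterpolation <|
    hF.eventually_convPow_apply_eq_zero hexh fun x hx =>
      algHom_sub_convOne_apply_eq_zero φ (hconn hx)
  exact ⟨(convCoeff P 1).ofConv, hP.convCoeff_one_mul_of_algHom, fun x =>
    ⟨(P x).natDegree + 1, fun n hn => hP.eq_sum_inv_factorial_smul hn⟩⟩

end Character

theorem convAPow_eq_convPow {k H A : Type*} [Field k] [Ring H] [HopfAlgebra k H] [CommRing A]
    [Algebra k A] (σ : H →ₗ[k] A) (n : ℕ) : convAPow k σ n = (toConv σ ^ n).ofConv := by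
  induction n with
  | zero => rfl
  | succ n ih => rw [pow_succ', convAPow, ih]; rfl

/-- **Every character is a convolution exponential.**  Let `H` be a connected
filtered Hopf algebra over a field `k` of characteristic zero and `A` a
commutative unital `k`-algebra.  Every character `φ ∈ G(H,A)` is the
convolution exponential `exp_⋆(σ) = Σ_{n≥0} σ^{⋆n}/n!` (a pointwise finite sum)
of some infinitesimal character `σ ∈ g(H,A)`. -/
theorem character_is_exp_of_infinitesimal_character
    (k : Type*) [Field k] [CharZero k]
    (H : Type*) [Ring H] [HopfAlgebra k H]
    (A : Type*) [CommRing A] [Algebra k A]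
    (F : ℕ → Submodule k H)
    (hmono : Monotone F)
    (hexh : (⨆ n, F n) = ⊤)
    (hmul : ∀ p q : ℕ, ∀ x ∈ F p, ∀ y ∈ F q, x * y ∈ F (p + q))
    (hcomul : ∀ n : ℕ, ∀ x ∈ F n,
      Coalgebra.comul (R := k) x ∈
        (Finset.range (n + 1)).sup fun p =>
          LinearMap.range (TensorProduct.map (F p).subtype (F (n - p)).subtype))
    (hconn : F 0 = Submodule.span k {(1 : H)})
    (φ : H →ₗ[k] A) (hφ : IsCharacter k φ) :
    ∃ σ : H →ₗ[k] A,
      IsInfChar k σ ∧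
      ∀ x : H, ∃ N : ℕ, ∀ n : ℕ, N ≤ n →
        φ x = ∑ j ∈ Finset.range n, ((j.factorial : k)⁻¹ • convAPow k σ j) x := by
  let : Algebra ℚ A := Algebra.compHom A (algebraMap ℚ k)
  simp only [LinearMap.smul_apply, convAPow_eq_convPow, inv_natCast_smul_eq k ℚ]
  exact character_is_exp_of_infinitesimal_character_general hexh hcomul hconn.le
    (AlgHom.ofLinearMap φ hφ.1 hφ.2)
end
end

section
/- Let k be a field of characteristic zero, Ω a set equipped with a commutative and associative binary operation Θ : Ω × Ω → Ω, and H_W the free k-vector space on words over Ω. The quasi-shuffle product ⧢_Θ, defined recursively by w ⧢_Θ ∅ = ∅ ⧢_Θ w = w and (au) ⧢_Θ (bv) = a(u ⧢_Θ bv) + b(au ⧢_Θ v) + Θ(a,b)(u ⧢_Θ v) for letters a,b and words u,v, together with the empty word ∅ as unit, the deconcatenation coproduct Δ(w) = Σ_{uv = w} v ⊗ u, and the counit δ_∅, makes H_W a commutative bialgebra, and hence (being connected filtered by word length) a Hopf algebra. -/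
open scoped TensorProduct
noncomputable section

variable (k : Type*) [Field k] {Ω : Type*}

/-- The vector space of words over the alphabet `Ω`: the free `k`-vector space
on the set of finite lists of letters. -/
abbrev HW (k : Type*) [Field k] (Ω : Type*) := List Ω →₀ k

/-- Quasi-shuffle product of two words:
`w ⧢_Θ ∅ = ∅ ⧢_Θ w = w` and
`(au) ⧢_Θ (bv) = a(u ⧢_Θ bv) + b(au ⧢_Θ v) + Θ(a,b)(u ⧢_Θ v)`. -/
def qshW (Θ : Ω → Ω → Ω) : List Ω → List Ω → HW k Ω
  | [], v => Finsupp.single v 1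
  | u, [] => Finsupp.single u 1
  | a :: u, b :: v =>
      Finsupp.mapDomain (a :: ·) (qshW Θ u (b :: v)) +
      Finsupp.mapDomain (b :: ·) (qshW Θ (a :: u) v) +
      Finsupp.mapDomain (Θ a b :: ·) (qshW Θ u v)
  termination_by u v => u.length + v.length

/-- Bilinear extension of the quasi-shuffle product to `HW k Ω`. -/
def qshL (Θ : Ω → Ω → Ω) : HW k Ω →ₗ[k] HW k Ω →ₗ[k] HW k Ω :=
  Finsupp.lift (HW k Ω →ₗ[k] HW k Ω) k (List Ω) fun u =>
    Finsupp.lift (HW k Ω) k (List Ω) fun v => qshW k Θ u v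

/-- Deconcatenation coproduct `Δ(w) = Σ_{uv = w} v ⊗ u`. -/
def deconcat : HW k Ω →ₗ[k] HW k Ω ⊗[k] HW k Ω :=
  Finsupp.lift (HW k Ω ⊗[k] HW k Ω) k (List Ω) fun w =>
    ∑ i ∈ Finset.range (w.length + 1),
      Finsupp.single (w.drop i) (1 : k) ⊗ₜ[k] Finsupp.single (w.take i) (1 : k)

/-- The counit `δ_∅`: indicator of the empty word. -/
def counitW : HW k Ω →ₗ[k] k :=
  Finsupp.lift k k (List Ω) fun w => match w with | [] => 1 | _ => 0

/-- The multiplication induced on `HW ⊗ HW` by the quasi-shuffle product: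
`(a ⊗ b)(c ⊗ d) = (a ⧢_Θ c) ⊗ (b ⧢_Θ d)`. -/
def mulHH (Θ : Ω → Ω → Ω) :
    (HW k Ω ⊗[k] HW k Ω) ⊗[k] (HW k Ω ⊗[k] HW k Ω) →ₗ[k] HW k Ω ⊗[k] HW k Ω :=
  (TensorProduct.map (TensorProduct.lift (qshL k Θ)) (TensorProduct.lift (qshL k Θ))) ∘ₗ
    (TensorProduct.tensorTensorTensorComm k (HW k Ω) (HW k Ω) (HW k Ω) (HW k Ω)).toLinearMap

/-- The filtration of `HW k Ω` by word length: span of words of length at most `n`. -/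
def filW (n : ℕ) : Submodule k (HW k Ω) :=
  Finsupp.supported k k {w : List Ω | w.length ≤ n}


/-!
In terms of the operators `cons a` prepending a letter, the quasi-shuffle product satisfies
`ax · by = a(x · by) + b(ax · y) + Θ(a,b)(x · y)` for arbitrary vectors `x` and `y`, and
deconcatenation satisfies `Δ(ax) = ax ⊗ 1 + (id ⊗ a)(Δ x)`. Expanding a triple product bracketed
either way gives the same seven terms up to smaller triple products, which is associativity. The
operators `id ⊗ a` obey the same three-term identity on the tensor square, which makes `Δ`
multiplicative. As for the antipode, `Δ(F n) ⊆ ∑ F p ⊗ F (n - p)` and `F 0 = k ∙ 1` force the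
convolution power `(1 - id) ^ (n + 1)` to vanish on `F n`, so the geometric series
`∑ (1 - id) ^ i` defines a convolution inverse of the identity.
-/

/-! ### Filtered coalgebras -/

section CoalgebraFiltration

open Coalgebra WithConv

theorem exists_linearMap_eqOn_of_directed {ι R M N : Type*} [Preorder ι] [Nonempty ι]
    [IsDirectedOrder ι] [Semiring R] [AddCommMonoid M] [Module R M] [AddCommMonoid N] [Module R N]
    {F : ι → Submodule R M} (hF : Monotone F) (htop : ⨆ i, F i = ⊤) (g : ι → M →ₗ[R] N)
    (hg : ∀ ⦃i j⦄, i ≤ j → Set.EqOn (g i) (g j) (F i)) :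
    ∃ f : M →ₗ[R] N, ∀ i, Set.EqOn f (g i) (F i) := by
  have hmem (x : M) : ∃ i, x ∈ F i :=
    (Submodule.mem_iSup_of_directed F hF.directed_le).1 (htop ▸ Submodule.mem_top)
  choose idx hidx using hmem
  have hindep {i : ι} {x : M} (hx : x ∈ F i) : g (idx x) x = g i x := by
    obtain ⟨j, hxj, hij⟩ := exists_ge_ge (idx x) i
    rw [hg hxj (hidx x), hg hij hx]
  refine ⟨{ toFun := fun x => g (idx x) x, map_add' := fun x y => ?_, map_smul' := fun c x => ?_ },
    fun _ _ hx => hindep hx⟩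
  · obtain ⟨j, hxj, hyj⟩ := exists_ge_ge (idx x) (idx y)
    have hx : x ∈ F j := hF hxj (hidx x)
    have hy : y ∈ F j := hF hyj (hidx y)
    rw [hindep hx, hindep hy, hindep (add_mem hx hy), map_add]
  · rw [hindep ((F (idx x)).smul_mem c (hidx x)), map_smul, RingHom.id_apply]

/-- The filtration of `C ⊗ C` induced by a filtration `F` of `C`, with `n`-th step
`∑_{p ≤ n} F p ⊗ F (n - p)`. -/
def tensorFiltration {R C : Type*} [CommSemiring R] [AddCommMonoid C] [Module R C]
    (F : ℕ → Submodule R C) (n : ℕ) : Submodule R (C ⊗[R] C) :=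
  (Finset.range (n + 1)).sup fun p =>
    LinearMap.range (TensorProduct.map (F p).subtype (F (n - p)).subtype)

theorem tmul_mem_tensorFiltration {R C : Type*} [CommSemiring R] [AddCommMonoid C] [Module R C]
    {F : ℕ → Submodule R C} {p n : ℕ} (hp : p ≤ n) {y z : C} (hy : y ∈ F p) (hz : z ∈ F (n - p)) :
    y ⊗ₜ z ∈ tensorFiltration F n :=
  Finset.le_sup
    (f := fun p => LinearMap.range (TensorProduct.map (F p).subtype (F (n - p)).subtype))
    (Finset.mem_range_succ_iff.2 hp) ⟨⟨y, hy⟩ ⊗ₜ ⟨z, hz⟩, TensorProduct.map_tmul _ _ _ _⟩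

/-- An exhaustive increasing filtration of a coalgebra by subspaces, compatible with the
coproduct. -/
structure IsCoalgebraFiltration {R C : Type*} [CommSemiring R] [AddCommMonoid C] [Module R C]
    [CoalgebraStruct R C] (F : ℕ → Submodule R C) : Prop where
  monotone : Monotone F
  iSup_eq_top : ⨆ n, F n = ⊤
  comul_mem : ∀ n, ∀ x ∈ F n, comul x ∈ tensorFiltration F n

namespace IsCoalgebraFiltration

section Semiring

variable {R C A M : Type*} [CommSemiring R] [AddCommMonoid C] [Module R C]
  [AddCommMonoid M] [Module R M]

theorem linearMap_ext [CoalgebraStruct R C] {F : ℕ → Submodule R C}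
    (hF : IsCoalgebraFiltration F) {f g : C →ₗ[R] M} (h : ∀ n, Set.EqOn f g (F n)) : f = g := by
  ext x
  obtain ⟨n, hx⟩ := (Submodule.mem_iSup_of_directed F hF.monotone.directed_le).1
    (hF.iSup_eq_top ▸ Submodule.mem_top : x ∈ ⨆ n, F n)
  exact h n hx

theorem map_comul_congr [CoalgebraStruct R C] {F : ℕ → Submodule R C}
    (hF : IsCoalgebraFiltration F) {φ ψ : C ⊗[R] C →ₗ[R] M} {n : ℕ}
    (h : ∀ p ≤ n, ∀ y ∈ F p, ∀ z ∈ F (n - p), φ (y ⊗ₜ z) = ψ (y ⊗ₜ z)) {x : C} (hx : x ∈ F n) :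
    φ (comul x) = ψ (comul x) := by
  have hle : tensorFiltration F n ≤ LinearMap.eqLocus φ ψ := by
    refine Finset.sup_le fun p hp => ?_
    rintro _ ⟨t, rfl⟩
    have hcomp : φ ∘ₗ TensorProduct.map (F p).subtype (F (n - p)).subtype =
        ψ ∘ₗ TensorProduct.map (F p).subtype (F (n - p)).subtype :=
      TensorProduct.ext' fun y z => h p (Finset.mem_range_succ_iff.1 hp) y y.2 z z.2
    exact LinearMap.congr_fun hcomp t
  exact hle (hF.comul_mem n x hx)

variable [Semiring A] [Algebra R A]

theorem convMul_congr [CoalgebraStruct R C] {F : ℕ → Submodule R C}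
    (hF : IsCoalgebraFiltration F) {f f' g g' : WithConv (C →ₗ[R] A)} {n : ℕ}
    (hf : Set.EqOn f.ofConv f'.ofConv (F n)) (hg : Set.EqOn g.ofConv g'.ofConv (F n)) :
    Set.EqOn (f * g).ofConv (f' * g').ofConv (F n) := by
  refine fun x hx => hF.map_comul_congr (φ := LinearMap.mul' R A ∘ₗ TensorProduct.map _ _)
    (ψ := LinearMap.mul' R A ∘ₗ TensorProduct.map _ _) (fun p hp y hy z hz => ?_) hx
  simp only [LinearMap.comp_apply, TensorProduct.map_tmul, hf (hF.monotone hp hy),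
    hg (hF.monotone (Nat.sub_le n p) hz)]

/-- In `Δ(F n) ⊆ ∑ F p ⊗ F (n - p)`, the power `f ^ m` kills the left factor if `p < m`, and `f`
kills the right factor if `p = n`. -/
theorem convPow_apply_eq_zero [Coalgebra R C] {F : ℕ → Submodule R C}
    (hF : IsCoalgebraFiltration F) {f : WithConv (C →ₗ[R] A)} (hf : ∀ x ∈ F 0, f x = 0)
    {m n : ℕ} (hnm : n < m) {x : C} (hx : x ∈ F n) : (f ^ m) x = 0 := by
  induction m generalizing n x with
  | zero => omega
  | succ m ih =>
    rw [pow_succ, LinearMap.convMul_apply, ← LinearMap.comp_apply]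
    refine hF.map_comul_congr (ψ := 0) (fun p hp y hy z hz => ?_) hx
    rw [LinearMap.comp_apply, TensorProduct.map_tmul, LinearMap.mul'_apply, LinearMap.zero_apply]
    rcases hp.lt_or_eq with hpn | rfl
    · rw [ih (by omega) hy, zero_mul]
    · rw [hf z (by simpa using hz), mul_zero]

end Semiring

variable {R C A : Type*} [CommSemiring R] [AddCommMonoid C] [Module R C] [Coalgebra R C] [Ring A]
  [Algebra R A] {F : ℕ → Submodule R C}

/-- The inverse is the geometric series `∑ (1 - f) ^ i`, a finite sum on each `F n`. -/
theorem isUnit_of_eqOn_one (hF : IsCoalgebraFiltration F) {f : WithConv (C →ₗ[R] A)}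
    (hf : Set.EqOn f.ofConv (1 : WithConv (C →ₗ[R] A)).ofConv (F 0)) : IsUnit f := by
  set e := 1 - f
  have hfe : 1 - e = f := sub_sub_cancel 1 f
  have he₀ (x : C) (hx : x ∈ F 0) : e x = 0 := sub_eq_zero.2 (hf hx).symm
  let partialSum (n : ℕ) : WithConv (C →ₗ[R] A) := ∑ i ∈ Finset.range (n + 1), e ^ i
  have hpartialSum ⦃n m : ℕ⦄ (hnm : n ≤ m) :
      Set.EqOn (partialSum n).ofConv (partialSum m).ofConv (F n) := fun x hx => by
    simp only [partialSum, WithConv.ofConv_sum, LinearMap.sum_apply]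
    refine Finset.sum_subset (Finset.range_mono (by omega)) fun i _ hi => ?_
    exact hF.convPow_apply_eq_zero he₀ (by simpa using hi) hx
  have hone {n : ℕ} {x : C} (hx : x ∈ F n) :
      (1 - e ^ (n + 1)).ofConv x = (1 : WithConv (C →ₗ[R] A)).ofConv x := by
    rw [WithConv.ofConv_sub, LinearMap.sub_apply,
      hF.convPow_apply_eq_zero he₀ n.lt_succ_self hx, sub_zero]
  obtain ⟨g, hg⟩ := exists_linearMap_eqOn_of_directed hF.monotone hF.iSup_eq_top
    (fun n => (partialSum n).ofConv) hpartialSum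
  refine ⟨⟨f, toConv g, WithConv.ofConv_injective <| hF.linearMap_ext fun n x hx => ?_,
    WithConv.ofConv_injective <| hF.linearMap_ext fun n x hx => ?_⟩, rfl⟩
  · rw [hF.convMul_congr (Set.eqOn_refl _ _) (hg n) hx, ← hfe, mul_neg_geom_sum, hone hx]
  · rw [hF.convMul_congr (hg n) (Set.eqOn_refl _ _) hx, ← hfe, geom_sum_mul_neg, hone hx]

end IsCoalgebraFiltration

/-- The Hopf algebra structure on a bialgebra whose identity has a convolution inverse, with that
inverse as antipode. -/
abbrev hopfAlgebraOfIsUnit {R B : Type*} [CommSemiring R] [Semiring B] [Bialgebra R B]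
    (h : IsUnit (toConv (LinearMap.id : B →ₗ[R] B))) : HopfAlgebra R B where
  antipode := (↑h.unit⁻¹ : WithConv (B →ₗ[R] B)).ofConv
  mul_antipode_rTensor_comul := congrArg ofConv h.val_inv_mul
  mul_antipode_lTensor_comul := congrArg ofConv h.mul_val_inv

/-- Connected filtered bialgebras are Hopf algebras. -/
abbrev IsCoalgebraFiltration.hopfAlgebra {R B : Type*} [CommSemiring R] [Ring B] [Bialgebra R B]
    {F : ℕ → Submodule R B} (hF : IsCoalgebraFiltration F) (hconn : F 0 = R ∙ (1 : B)) :
    HopfAlgebra R B :=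
  hopfAlgebraOfIsUnit <| hF.isUnit_of_eqOn_one fun x hx => by
    obtain ⟨c, rfl⟩ := Submodule.mem_span_singleton.1 (hconn ▸ hx : x ∈ R ∙ (1 : B))
    simp [Algebra.algebraMap_eq_smul_one]

end CoalgebraFiltration

/-! ### The quasi-shuffle Hopf algebra -/

/-- The space `HW k Ω` of words, carrying the quasi-shuffle product of `Θ` as multiplication. A type
synonym, since `List Ω →₀ k` already has a pointwise product and a coalgebra structure in which
every word is group-like; its product, coproduct and counit are definitionally `qshL`, `deconcat`
and `counitW`. -/
def QuasiShuffleAlgebra (k : Type*) [Field k] {Ω : Type*} (_Θ : Ω → Ω → Ω) := HW k Ω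

namespace QuasiShuffleAlgebra

open Coalgebra

variable {k : Type*} [Field k] {Ω : Type*} {Θ : Ω → Ω → Ω}

instance : AddCommGroup (QuasiShuffleAlgebra k Θ) := inferInstanceAs (AddCommGroup (HW k Ω))

instance : Module k (QuasiShuffleAlgebra k Θ) := inferInstanceAs (Module k (HW k Ω))

/-- The basis vector of `QuasiShuffleAlgebra k Θ` given by a word. -/
def word (w : List Ω) : QuasiShuffleAlgebra k Θ := Finsupp.single w (1 : k)

/-- Prepending a letter to every word. -/
def cons (a : Ω) : QuasiShuffleAlgebra k Θ →ₗ[k] QuasiShuffleAlgebra k Θ :=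
  Finsupp.lmapDomain k k (a :: ·)

theorem cons_word (a : Ω) (w : List Ω) :
    cons a (word w : QuasiShuffleAlgebra k Θ) = word (a :: w) :=
  Finsupp.mapDomain_single

theorem linearMap_ext {M : Type*} [AddCommMonoid M] [Module k M]
    {f g : QuasiShuffleAlgebra k Θ →ₗ[k] M} (h : ∀ w, f (word w) = g (word w)) : f = g :=
  Finsupp.lhom_ext' fun w => LinearMap.ext_ring (h w)

instance : One (QuasiShuffleAlgebra k Θ) := ⟨word []⟩

instance : Mul (QuasiShuffleAlgebra k Θ) := ⟨fun x y => qshL k Θ x y⟩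

theorem word_nil : (word [] : QuasiShuffleAlgebra k Θ) = 1 := rfl

theorem word_mul_word (u v : List Ω) :
    (word u * word v : QuasiShuffleAlgebra k Θ) = qshW k Θ u v := by
  change qshL k Θ (Finsupp.single u 1) (Finsupp.single v 1) = _
  simp [qshL]

protected theorem one_mul (x : QuasiShuffleAlgebra k Θ) : 1 * x = x := by
  have h : qshL k Θ (1 : QuasiShuffleAlgebra k Θ) = LinearMap.id (M := QuasiShuffleAlgebra k Θ) :=
    linearMap_ext fun v => (word_mul_word [] v).trans (by rw [qshW]; rfl)
  exact LinearMap.congr_fun h x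

protected theorem mul_one (x : QuasiShuffleAlgebra k Θ) : x * 1 = x := by
  have h : (qshL k Θ).flip (1 : QuasiShuffleAlgebra k Θ) =
      LinearMap.id (M := QuasiShuffleAlgebra k Θ) :=
    linearMap_ext fun u => (word_mul_word u []).trans (by cases u <;> simp only [qshW] <;> rfl)
  exact LinearMap.congr_fun h x

instance : NonAssocRing (QuasiShuffleAlgebra k Θ) where
  __ := (inferInstance : AddCommGroup (QuasiShuffleAlgebra k Θ))
  left_distrib x := map_add (qshL k Θ x)
  right_distrib := LinearMap.map_add₂ (qshL k Θ)
  zero_mul := LinearMap.map_zero₂ (qshL k Θ)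
  mul_zero x := map_zero (qshL k Θ x)
  one_mul := QuasiShuffleAlgebra.one_mul
  mul_one := QuasiShuffleAlgebra.mul_one

instance : IsScalarTower k (QuasiShuffleAlgebra k Θ) (QuasiShuffleAlgebra k Θ) :=
  ⟨fun c x y => LinearMap.map_smul₂ (qshL k Θ) c x y⟩

instance : SMulCommClass k (QuasiShuffleAlgebra k Θ) (QuasiShuffleAlgebra k Θ) :=
  ⟨fun c x y => (map_smul (qshL k Θ x) c y).symm⟩

@[elab_as_elim]
theorem induction_on {p : QuasiShuffleAlgebra k Θ → Prop} (x : QuasiShuffleAlgebra k Θ)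
    (one : p 1) (cons : ∀ a x, p x → p (cons a x)) (add : ∀ x y, p x → p y → p (x + y))
    (smul : ∀ (c : k) x, p x → p (c • x)) : p x := by
  have hword (w : List Ω) : p (word w) := by
    induction w with
    | nil => exact one
    | cons a w ih => exact cons_word (k := k) (Θ := Θ) a w ▸ cons a _ ih
  refine Finsupp.induction_linear x ?_ add fun w c => ?_
  · exact zero_smul k (1 : QuasiShuffleAlgebra k Θ) ▸ smul 0 1 one
  · exact Finsupp.smul_single_one w c ▸ smul c _ (hword w)

theorem cons_mul_cons (a b : Ω) (x y : QuasiShuffleAlgebra k Θ) :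
    cons a x * cons b y =
      cons a (x * cons b y) + cons b (cons a x * y) + cons (Θ a b) (x * y) := by
  have hmul : (LinearMap.mul k (QuasiShuffleAlgebra k Θ)).compl₁₂ (cons a) (cons b) =
      ((LinearMap.mul k (QuasiShuffleAlgebra k Θ)).compl₂ (cons b)).compr₂ (cons a) +
        ((LinearMap.mul k (QuasiShuffleAlgebra k Θ)).comp (cons a)).compr₂ (cons b) +
          (LinearMap.mul k (QuasiShuffleAlgebra k Θ)).compr₂ (cons (Θ a b)) := by
    refine linearMap_ext fun u => linearMap_ext fun v => ?_
    simp only [LinearMap.compl₁₂_apply, LinearMap.add_apply, LinearMap.compr₂_apply,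
      LinearMap.compl₂_apply, LinearMap.comp_apply, LinearMap.mul_apply', cons_word, word_mul_word]
    rw [qshW]
    rfl
  exact LinearMap.congr_fun₂ hmul x y

theorem cons_mul_cons_mul_cons (a b c : Ω) (x y z : QuasiShuffleAlgebra k Θ) :
    cons a x * cons b y * cons c z =
      cons a (x * cons b y * cons c z) + cons b (cons a x * y * cons c z) +
        cons c (cons a x * cons b y * z) + cons (Θ a b) (x * y * cons c z) +
        cons (Θ a c) (x * cons b y * z) + cons (Θ b c) (cons a x * y * z) +
        cons (Θ (Θ a b) c) (x * y * z) := by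
  have hc : cons c (cons a x * cons b y * z) = cons c (cons a (x * cons b y) * z) +
      cons c (cons b (cons a x * y) * z) + cons c (cons (Θ a b) (x * y) * z) := by
    rw [cons_mul_cons, add_mul, add_mul, map_add, map_add]
  rw [hc, cons_mul_cons a b, add_mul, add_mul, cons_mul_cons, cons_mul_cons, cons_mul_cons]
  abel

theorem cons_mul_cons_mul_cons' (a b c : Ω) (x y z : QuasiShuffleAlgebra k Θ) :
    cons a x * (cons b y * cons c z) =
      cons a (x * (cons b y * cons c z)) + cons b (cons a x * (y * cons c z)) +
        cons c (cons a x * (cons b y * z)) + cons (Θ a b) (x * (y * cons c z)) +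
        cons (Θ a c) (x * (cons b y * z)) + cons (Θ b c) (cons a x * (y * z)) +
        cons (Θ a (Θ b c)) (x * (y * z)) := by
  have ha : cons a (x * (cons b y * cons c z)) = cons a (x * cons b (y * cons c z)) +
      cons a (x * cons c (cons b y * z)) + cons a (x * cons (Θ b c) (y * z)) := by
    rw [cons_mul_cons, mul_add, mul_add, map_add, map_add]
  rw [ha, cons_mul_cons b c, mul_add, mul_add, cons_mul_cons, cons_mul_cons, cons_mul_cons]
  abel

protected theorem mul_comm [Std.Commutative Θ] (x y : QuasiShuffleAlgebra k Θ) :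
    x * y = y * x := by
  induction x using induction_on generalizing y with
  | one => rw [one_mul, mul_one]
  | add x x' hx hx' => rw [add_mul, mul_add, hx, hx']
  | smul c x hx => rw [smul_mul_assoc, mul_smul_comm, hx]
  | cons a x hx =>
    induction y using induction_on with
    | one => rw [one_mul, mul_one]
    | add y y' hy hy' => rw [add_mul, mul_add, hy, hy']
    | smul c y hy => rw [smul_mul_assoc, mul_smul_comm, hy]
    | cons b y hy =>
      rw [cons_mul_cons, cons_mul_cons, hx, hx, hy, Std.Commutative.comm (op := Θ) a,
        add_comm (cons a _)]

protected theorem mul_assoc [Std.Associative Θ] (x y z : QuasiShuffleAlgebra k Θ) :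
    x * y * z = x * (y * z) := by
  induction x using induction_on generalizing y z with
  | one => simp only [one_mul]
  | add x x' hx hx' => simp only [add_mul, hx, hx']
  | smul c x hx => simp only [smul_mul_assoc, hx]
  | cons a x hx =>
    induction y using induction_on generalizing z with
    | one => simp only [one_mul, mul_one]
    | add y y' hy hy' => simp only [mul_add, add_mul, hy, hy']
    | smul c y hy => simp only [smul_mul_assoc, mul_smul_comm, hy]
    | cons b y hy =>
      induction z using induction_on with
      | one => simp only [mul_one]
      | add z z' hz hz' => simp only [mul_add, hz, hz']
      | smul c z hz => simp only [mul_smul_comm, hz]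
      | cons c z hz =>
        rw [cons_mul_cons_mul_cons, cons_mul_cons_mul_cons', Std.Associative.assoc (op := Θ), hz]
        simp only [hx, hy]

instance : CoalgebraStruct k (QuasiShuffleAlgebra k Θ) where
  comul := deconcat k
  counit := counitW k

theorem comul_word (w : List Ω) :
    comul (R := k) (word w : QuasiShuffleAlgebra k Θ) =
      ∑ i ∈ Finset.range (w.length + 1), word (w.drop i) ⊗ₜ word (w.take i) := by
  change deconcat k (Finsupp.single w 1) = _
  simp only [deconcat, Finsupp.lift_apply, zero_smul, Finsupp.sum_single_index, one_smul]
  rfl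

theorem comul_one : comul (R := k) (1 : QuasiShuffleAlgebra k Θ) = 1 := by
  rw [← word_nil, comul_word]
  simp [word_nil, Algebra.TensorProduct.one_def]

/-- Prepending a letter to the words in the right tensor factor. -/
abbrev consRight (a : Ω) : QuasiShuffleAlgebra k Θ ⊗[k] QuasiShuffleAlgebra k Θ →ₗ[k]
    QuasiShuffleAlgebra k Θ ⊗[k] QuasiShuffleAlgebra k Θ :=
  (cons a).lTensor (QuasiShuffleAlgebra k Θ)

theorem comul_cons (a : Ω) (x : QuasiShuffleAlgebra k Θ) :
    comul (R := k) (cons a x) = cons a x ⊗ₜ 1 + consRight a (comul x) := by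
  have hcomul : comul ∘ₗ cons a =
      (TensorProduct.mk k (QuasiShuffleAlgebra k Θ) (QuasiShuffleAlgebra k Θ)).flip 1 ∘ₗ cons a +
        consRight a ∘ₗ comul := by
    refine linearMap_ext fun w => ?_
    simp only [LinearMap.comp_apply, LinearMap.add_apply, cons_word, comul_word,
      LinearMap.flip_apply, TensorProduct.mk_apply, map_sum, LinearMap.lTensor_tmul]
    rw [List.length_cons, Finset.sum_range_succ', add_comm]
    rfl
  exact LinearMap.congr_fun hcomul x

theorem counit_one : counit (R := k) (1 : QuasiShuffleAlgebra k Θ) = 1 := by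
  change counitW k (Finsupp.single [] 1) = 1
  simp [counitW]

theorem counit_cons (a : Ω) (x : QuasiShuffleAlgebra k Θ) : counit (R := k) (cons a x) = 0 := by
  have hcounit : counit ∘ₗ cons a = (0 : QuasiShuffleAlgebra k Θ →ₗ[k] k) :=
    linearMap_ext fun w => by
      rw [LinearMap.comp_apply, cons_word]
      change counitW k (Finsupp.single (a :: w) 1) = 0
      simp [counitW]
  exact LinearMap.congr_fun hcounit x

theorem counit_mul (x y : QuasiShuffleAlgebra k Θ) :
    counit (R := k) (x * y) = counit x * counit y := by
  induction x using induction_on generalizing y with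
  | one => rw [one_mul, counit_one, one_mul]
  | add x x' hx hx' => simp only [add_mul, map_add, hx, hx']
  | smul c x hx => simp only [smul_mul_assoc, map_smul, hx]
  | cons a x _ =>
    induction y using induction_on with
    | one => rw [mul_one, counit_one, mul_one]
    | add y y' hy hy' => simp only [mul_add, map_add, hy, hy']
    | smul c y hy => simp only [mul_smul_comm, map_smul, hy]
    | cons b y _ => simp only [cons_mul_cons, map_add, counit_cons, add_zero, mul_zero]

theorem assoc_rTensor_comul_consRight (a : Ω)
    (t : QuasiShuffleAlgebra k Θ ⊗[k] QuasiShuffleAlgebra k Θ) :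
    TensorProduct.assoc k _ _ _ (comul.rTensor (QuasiShuffleAlgebra k Θ) (consRight a t)) =
      (consRight a).lTensor (QuasiShuffleAlgebra k Θ)
        (TensorProduct.assoc k _ _ _ (comul.rTensor (QuasiShuffleAlgebra k Θ) t)) := by
  rw [← LinearMap.comp_apply, LinearMap.rTensor_comp_lTensor, ← LinearMap.lTensor_comp_rTensor,
    LinearMap.comp_apply, LinearMap.lTensor_tensor]
  exact LinearEquiv.apply_symm_apply _ _

theorem lTensor_comul_consRight (a : Ω)
    (t : QuasiShuffleAlgebra k Θ ⊗[k] QuasiShuffleAlgebra k Θ) :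
    comul.lTensor (QuasiShuffleAlgebra k Θ) (consRight a t) =
      TensorProduct.assoc k _ _ _ (consRight a t ⊗ₜ 1) +
        (consRight a).lTensor (QuasiShuffleAlgebra k Θ)
          (comul.lTensor (QuasiShuffleAlgebra k Θ) t) := by
  induction t with
  | zero => simp only [map_zero, TensorProduct.zero_tmul, add_zero]
  | add s t hs ht =>
    simp only [map_add, TensorProduct.add_tmul, hs, ht]
    abel
  | tmul x y =>
    simp only [LinearMap.lTensor_tmul, comul_cons, TensorProduct.tmul_add,
      TensorProduct.assoc_tmul]

protected theorem coassoc_apply (x : QuasiShuffleAlgebra k Θ) :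
    TensorProduct.assoc k _ _ _ (comul.rTensor (QuasiShuffleAlgebra k Θ) (comul (R := k) x)) =
      comul.lTensor (QuasiShuffleAlgebra k Θ) (comul (R := k) x) := by
  induction x using induction_on with
  | one =>
    simp only [comul_one, Algebra.TensorProduct.one_def, LinearMap.rTensor_tmul,
      LinearMap.lTensor_tmul, TensorProduct.assoc_tmul]
  | add x y hx hy => simp only [map_add, hx, hy]
  | smul c x hx => simp only [map_smul, hx]
  | cons a x hx =>
    rw [comul_cons, map_add, map_add, map_add, lTensor_comul_consRight,
      assoc_rTensor_comul_consRight, hx, LinearMap.rTensor_tmul, LinearMap.lTensor_tmul,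
      comul_cons, TensorProduct.add_tmul, map_add, TensorProduct.assoc_tmul, comul_one, add_assoc,
      Algebra.TensorProduct.one_def]

protected theorem rTensor_counit_comul (x : QuasiShuffleAlgebra k Θ) :
    counit.rTensor (QuasiShuffleAlgebra k Θ) (comul (R := k) x) = 1 ⊗ₜ x := by
  induction x using induction_on with
  | one => rw [comul_one, Algebra.TensorProduct.one_def, LinearMap.rTensor_tmul, counit_one]
  | add x y hx hy => simp only [map_add, hx, hy, TensorProduct.tmul_add]
  | smul c x hx => simp only [map_smul, hx, TensorProduct.tmul_smul]
  | cons a x hx =>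
    rw [comul_cons, map_add, LinearMap.rTensor_tmul, counit_cons, TensorProduct.zero_tmul, zero_add,
      ← LinearMap.comp_apply, LinearMap.rTensor_comp_lTensor, ← LinearMap.lTensor_comp_rTensor,
      LinearMap.comp_apply, hx, LinearMap.lTensor_tmul]

protected theorem lTensor_counit_comul (x : QuasiShuffleAlgebra k Θ) :
    counit.lTensor (QuasiShuffleAlgebra k Θ) (comul (R := k) x) = x ⊗ₜ 1 := by
  induction x using induction_on with
  | one => rw [comul_one, Algebra.TensorProduct.one_def, LinearMap.lTensor_tmul, counit_one]
  | add x y hx hy => simp only [map_add, hx, hy, TensorProduct.add_tmul]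
  | smul c x hx => simp only [map_smul, hx, TensorProduct.smul_tmul']
  | cons a x _ =>
    have hzero : counit ∘ₗ cons a = (0 : QuasiShuffleAlgebra k Θ →ₗ[k] k) :=
      LinearMap.ext (counit_cons a)
    rw [comul_cons, map_add, LinearMap.lTensor_tmul, counit_one, ← LinearMap.lTensor_comp_apply,
      hzero, LinearMap.lTensor_zero, LinearMap.zero_apply, add_zero]

instance : Coalgebra k (QuasiShuffleAlgebra k Θ) where
  coassoc := LinearMap.ext QuasiShuffleAlgebra.coassoc_apply
  rTensor_counit_comp_comul := LinearMap.ext QuasiShuffleAlgebra.rTensor_counit_comul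
  lTensor_counit_comp_comul := LinearMap.ext QuasiShuffleAlgebra.lTensor_counit_comul

theorem consRight_mul_tmul_one (a : Ω) (s : QuasiShuffleAlgebra k Θ ⊗[k] QuasiShuffleAlgebra k Θ)
    (y : QuasiShuffleAlgebra k Θ) :
    consRight a s * (y ⊗ₜ 1) = consRight a (s * (y ⊗ₜ 1)) := by
  induction s with
  | zero => simp only [map_zero, zero_mul]
  | add s t hs ht => simp only [map_add, add_mul, hs, ht]
  | tmul x z => simp only [LinearMap.lTensor_tmul, Algebra.TensorProduct.tmul_mul_tmul, mul_one]

theorem tmul_one_mul_consRight (b : Ω) (x : QuasiShuffleAlgebra k Θ)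
    (t : QuasiShuffleAlgebra k Θ ⊗[k] QuasiShuffleAlgebra k Θ) :
    (x ⊗ₜ 1) * consRight b t = consRight b ((x ⊗ₜ 1) * t) := by
  induction t with
  | zero => simp only [map_zero, mul_zero]
  | add s t hs ht => simp only [map_add, mul_add, hs, ht]
  | tmul y z => simp only [LinearMap.lTensor_tmul, Algebra.TensorProduct.tmul_mul_tmul, one_mul]

theorem consRight_mul_consRight (a b : Ω)
    (s t : QuasiShuffleAlgebra k Θ ⊗[k] QuasiShuffleAlgebra k Θ) :
    consRight a s * consRight b t =
      consRight a (s * consRight b t) + consRight b (consRight a s * t) +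
        consRight (Θ a b) (s * t) := by
  induction s with
  | zero => simp only [map_zero, zero_mul, add_zero]
  | add s s' hs hs' =>
    simp only [map_add, add_mul, hs, hs']
    abel
  | tmul x y =>
    induction t with
    | zero => simp only [map_zero, mul_zero, add_zero]
    | add t t' ht ht' =>
      simp only [map_add, mul_add, ht, ht']
      abel
    | tmul z w =>
      simp only [LinearMap.lTensor_tmul, Algebra.TensorProduct.tmul_mul_tmul, cons_mul_cons,
        TensorProduct.tmul_add]

theorem comul_mul (x y : QuasiShuffleAlgebra k Θ) :
    comul (R := k) (x * y) = comul x * comul y := by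
  induction x using induction_on generalizing y with
  | one => rw [one_mul, comul_one, one_mul]
  | add x x' hx hx' => simp only [add_mul, map_add, hx, hx']
  | smul c x hx => simp only [smul_mul_assoc, map_smul, hx]
  | cons a x hx =>
    induction y using induction_on with
    | one => rw [mul_one, comul_one, mul_one]
    | add y y' hy hy' => simp only [mul_add, map_add, hy, hy']
    | smul c y hy => simp only [mul_smul_comm, map_smul, hy]
    | cons b y hy =>
      rw [cons_mul_cons, map_add, map_add, comul_cons a (x * _), comul_cons b (_ * y),
        comul_cons (Θ a b), hx, hx, hy]
      simp only [comul_cons, add_mul, mul_add, map_add, consRight_mul_consRight,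
        tmul_one_mul_consRight, consRight_mul_tmul_one, Algebra.TensorProduct.tmul_mul_tmul,
        cons_mul_cons, TensorProduct.add_tmul, mul_one]
      abel

section Associative

variable [Std.Associative Θ]

instance : Ring (QuasiShuffleAlgebra k Θ) where
  mul_assoc := QuasiShuffleAlgebra.mul_assoc

instance : Algebra k (QuasiShuffleAlgebra k Θ) :=
  Algebra.ofModule smul_mul_assoc mul_smul_comm

instance : Bialgebra k (QuasiShuffleAlgebra k Θ) :=
  Bialgebra.mk' k _ counit_one (counit_mul _ _) comul_one (comul_mul _ _)

end Associative

variable (k Θ) in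
/-- The filtration by word length, `filW` on the type synonym. -/
def lengthFiltration (n : ℕ) : Submodule k (QuasiShuffleAlgebra k Θ) := filW k n

theorem lengthFiltration_eq_span (n : ℕ) :
    lengthFiltration k Θ n = Submodule.span k (word '' {w | w.length ≤ n}) :=
  Finsupp.supported_eq_span_single k _

theorem lengthFiltration_le_iff {n : ℕ} {p : Submodule k (QuasiShuffleAlgebra k Θ)} :
    lengthFiltration k Θ n ≤ p ↔ ∀ w : List Ω, w.length ≤ n → word w ∈ p := by
  rw [lengthFiltration_eq_span, Submodule.span_le]
  exact Set.forall_mem_image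

theorem word_mem_lengthFiltration {w : List Ω} {n : ℕ} (h : w.length ≤ n) :
    word w ∈ lengthFiltration k Θ n :=
  lengthFiltration_le_iff.1 le_rfl w h

theorem lengthFiltration_mono : Monotone (lengthFiltration k Θ) :=
  fun _ _ h => lengthFiltration_le_iff.2 fun _ hw => word_mem_lengthFiltration (hw.trans h)

theorem iSup_lengthFiltration : ⨆ n, lengthFiltration k Θ n = ⊤ := by
  refine eq_top_iff.2 fun x _ => Submodule.mem_iSup_of_mem (x.support.sup List.length) ?_
  exact (Finsupp.mem_supported k x).2 fun w hw => Finset.le_sup (f := List.length) hw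

theorem lengthFiltration_zero : lengthFiltration k Θ 0 = k ∙ (1 : QuasiShuffleAlgebra k Θ) := by
  rw [lengthFiltration_eq_span, ← word_nil]
  congr 1
  ext x
  simp

theorem cons_mem_lengthFiltration (a : Ω) {n : ℕ} {x : QuasiShuffleAlgebra k Θ}
    (hx : x ∈ lengthFiltration k Θ n) : cons a x ∈ lengthFiltration k Θ (n + 1) := by
  have hle : lengthFiltration k Θ n ≤ (lengthFiltration k Θ (n + 1)).comap (cons a) :=
    lengthFiltration_le_iff.2 fun w hw => by
      rw [Submodule.mem_comap, cons_word]
      exact word_mem_lengthFiltration (Nat.succ_le_succ hw)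
  exact hle hx

theorem word_mul_word_mem_lengthFiltration (u v : List Ω) :
    word u * word v ∈ lengthFiltration k Θ (u.length + v.length) := by
  induction u generalizing v with
  | nil =>
    rw [word_nil, one_mul]
    exact word_mem_lengthFiltration (by simp)
  | cons a u ihu =>
    induction v with
    | nil =>
      rw [word_nil, mul_one]
      exact word_mem_lengthFiltration (by simp)
    | cons b v ihv =>
      have ha := cons_mem_lengthFiltration a (ihu (b :: v))
      have hb := cons_mem_lengthFiltration b ihv
      have hab := cons_mem_lengthFiltration (Θ a b) (ihu v)
      rw [← cons_word a, ← cons_word b, cons_mul_cons, cons_word, cons_word]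
      refine add_mem (add_mem (lengthFiltration_mono ?_ ha) (lengthFiltration_mono ?_ hb))
        (lengthFiltration_mono ?_ hab) <;> simp only [List.length_cons] <;> omega

theorem mul_mem_lengthFiltration {p q : ℕ} {x y : QuasiShuffleAlgebra k Θ}
    (hx : x ∈ lengthFiltration k Θ p) (hy : y ∈ lengthFiltration k Θ q) :
    x * y ∈ lengthFiltration k Θ (p + q) := by
  have hword (u : List Ω) (hu : u.length ≤ p) : lengthFiltration k Θ q ≤
      (lengthFiltration k Θ (p + q)).comap (LinearMap.mulLeft k (word u)) :=
    lengthFiltration_le_iff.2 fun v hv =>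
      lengthFiltration_mono (add_le_add hu hv) (word_mul_word_mem_lengthFiltration u v)
  have hle : lengthFiltration k Θ p ≤
      (lengthFiltration k Θ (p + q)).comap (LinearMap.mulRight k y) :=
    lengthFiltration_le_iff.2 fun u hu => hword u hu hy
  exact hle hx

theorem comul_word_mem_tensorFiltration {w : List Ω} {n : ℕ} (hw : w.length ≤ n) :
    comul (R := k) (word w) ∈ tensorFiltration (lengthFiltration k Θ) n := by
  rw [comul_word]
  refine Submodule.sum_mem _ fun i hi => ?_
  rw [Finset.mem_range_succ_iff] at hi
  refine tmul_mem_tensorFiltration (n.sub_le i) (word_mem_lengthFiltration ?_)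
    (word_mem_lengthFiltration ?_)
  · rw [List.length_drop]; omega
  · rw [List.length_take]; omega

variable (k Θ) in
theorem isCoalgebraFiltration_lengthFiltration :
    IsCoalgebraFiltration (lengthFiltration k Θ) where
  monotone := lengthFiltration_mono
  iSup_eq_top := iSup_lengthFiltration
  comul_mem n x hx := by
    have hle : lengthFiltration k Θ n ≤
        (tensorFiltration (lengthFiltration k Θ) n).comap comul :=
      lengthFiltration_le_iff.2 fun w hw => comul_word_mem_tensorFiltration hw
    exact hle hx

instance [Std.Associative Θ] : HopfAlgebra k (QuasiShuffleAlgebra k Θ) :=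
  (isCoalgebraFiltration_lengthFiltration k Θ).hopfAlgebra lengthFiltration_zero

theorem lift_qshL : TensorProduct.lift (qshL k Θ) = LinearMap.mul' k (QuasiShuffleAlgebra k Θ) :=
  TensorProduct.ext' fun _ _ => rfl

theorem mulHH_eq_mul' :
    mulHH k Θ = LinearMap.mul' k (QuasiShuffleAlgebra k Θ ⊗[k] QuasiShuffleAlgebra k Θ) :=
  TensorProduct.ext_fourfold' fun x y z w =>
    (Algebra.TensorProduct.tmul_mul_tmul (R := k) (A := QuasiShuffleAlgebra k Θ)
      (B := QuasiShuffleAlgebra k Θ) x z y w).symm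

end QuasiShuffleAlgebra

theorem quasi_shuffle_words_bialgebra_connected_filtered_hopf_general
    (k : Type*) [Field k] (Ω : Type*) (Θ : Ω → Ω → Ω)
    (hassoc : ∀ a b c : Ω, Θ (Θ a b) c = Θ a (Θ b c)) :
    ((∀ a b : Ω, Θ a b = Θ b a) → ∀ x y : HW k Ω, qshL k Θ x y = qshL k Θ y x) ∧
    (∀ x y z : HW k Ω, qshL k Θ (qshL k Θ x y) z = qshL k Θ x (qshL k Θ y z)) ∧
    (∀ x : HW k Ω, qshL k Θ (Finsupp.single [] 1) x = x ∧
      qshL k Θ x (Finsupp.single [] 1) = x) ∧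
    (∀ x : HW k Ω,
      (TensorProduct.assoc k (HW k Ω) (HW k Ω) (HW k Ω))
          ((deconcat k).rTensor (HW k Ω) (deconcat k x)) =
        (deconcat k).lTensor (HW k Ω) (deconcat k x)) ∧
    (∀ x : HW k Ω,
      (TensorProduct.lid k (HW k Ω)) ((counitW k).rTensor (HW k Ω) (deconcat k x)) = x ∧
      (TensorProduct.rid k (HW k Ω)) ((counitW k).lTensor (HW k Ω) (deconcat k x)) = x) ∧
    (deconcat k (Finsupp.single ([] : List Ω) (1 : k)) =
        Finsupp.single [] 1 ⊗ₜ[k] Finsupp.single [] 1) ∧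
    (∀ x y : HW k Ω,
      deconcat k (qshL k Θ x y) = mulHH k Θ (deconcat k x ⊗ₜ[k] deconcat k y)) ∧
    (counitW k (Finsupp.single ([] : List Ω) (1 : k)) = 1) ∧
    (∀ x y : HW k Ω, counitW k (qshL k Θ x y) = counitW k x * counitW k y) ∧
    Monotone (filW k (Ω := Ω)) ∧ (⨆ n, filW k (Ω := Ω) n) = ⊤ ∧
    (∀ p q : ℕ, ∀ x ∈ filW k (Ω := Ω) p, ∀ y ∈ filW k q,
      qshL k Θ x y ∈ filW k (p + q)) ∧
    (∀ n : ℕ, ∀ x ∈ filW k (Ω := Ω) n,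
      deconcat k x ∈
        (Finset.range (n + 1)).sup fun p =>
          LinearMap.range
            (TensorProduct.map (filW k (Ω := Ω) p).subtype
              (filW k (Ω := Ω) (n - p)).subtype)) ∧
    (filW k (Ω := Ω) 0 = Submodule.span k {Finsupp.single [] 1}) ∧
    (∃ S : HW k Ω →ₗ[k] HW k Ω,
      ∀ x : HW k Ω,
        TensorProduct.lift (qshL k Θ) (S.rTensor (HW k Ω) (deconcat k x)) =
          counitW k x • Finsupp.single [] 1 ∧
        TensorProduct.lift (qshL k Θ) (S.lTensor (HW k Ω) (deconcat k x)) =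
          counitW k x • Finsupp.single [] 1) := by
  have : Std.Associative Θ := ⟨hassoc⟩
  let A := QuasiShuffleAlgebra k Θ
  have hfil := QuasiShuffleAlgebra.isCoalgebraFiltration_lengthFiltration k Θ
  refine ⟨fun hcomm => ?_, mul_assoc (G := A), fun x => ⟨one_mul (M := A) x, mul_one (M := A) x⟩,
    QuasiShuffleAlgebra.coassoc_apply (Θ := Θ), fun x => ⟨?_, ?_⟩, Bialgebra.comul_one (A := A), ?_,
    Bialgebra.counit_one (A := A), Bialgebra.counit_mul (A := A), hfil.monotone, hfil.iSup_eq_top,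
    fun _ _ _ hx _ hy => QuasiShuffleAlgebra.mul_mem_lengthFiltration hx hy, hfil.comul_mem,
    QuasiShuffleAlgebra.lengthFiltration_zero (Θ := Θ), HopfAlgebra.antipode k (A := A), ?_⟩
  · have : Std.Commutative Θ := ⟨hcomm⟩
    exact QuasiShuffleAlgebra.mul_comm (Θ := Θ)
  · have hcounit := Coalgebra.rTensor_counit_comul (R := k) (A := A) x
    exact (congrArg (TensorProduct.lid k A) hcounit).trans (one_smul k x)
  · have hcounit := Coalgebra.lTensor_counit_comul (R := k) (A := A) x
    exact (congrArg (TensorProduct.rid k A) hcounit).trans (one_smul k x)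
  · rw [QuasiShuffleAlgebra.mulHH_eq_mul']
    exact QuasiShuffleAlgebra.comul_mul
  · rw [QuasiShuffleAlgebra.lift_qshL]
    exact fun x => ⟨HopfAlgebra.mul_antipode_rTensor_comul_apply (A := A) x,
      HopfAlgebra.mul_antipode_lTensor_comul_apply (A := A) x⟩

/-- **The quasi-shuffle Hopf algebra of words.**  Over a field `k` of characteristic
zero, given a commutative and associative operation `Θ` on the alphabet `Ω`, the
free vector space on words over `Ω` endowed with the quasi-shuffle product `⧢_Θ`,
the empty word as unit, the deconcatenation coproduct and the counit `δ_∅` is a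
commutative bialgebra, which is connected filtered by word length, and hence a
Hopf algebra (there is an antipode `S_Θ`). -/
theorem quasi_shuffle_words_bialgebra_connected_filtered_hopf
    (k : Type*) [Field k] [CharZero k] (Ω : Type*) (Θ : Ω → Ω → Ω)
    (hcomm : ∀ a b : Ω, Θ a b = Θ b a)
    (hassoc : ∀ a b c : Ω, Θ (Θ a b) c = Θ a (Θ b c)) :
    -- commutativity
    (∀ x y : HW k Ω, qshL k Θ x y = qshL k Θ y x) ∧
    -- associativity
    (∀ x y z : HW k Ω, qshL k Θ (qshL k Θ x y) z = qshL k Θ x (qshL k Θ y z)) ∧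
    -- the empty word is a unit
    (∀ x : HW k Ω, qshL k Θ (Finsupp.single [] 1) x = x ∧
      qshL k Θ x (Finsupp.single [] 1) = x) ∧
    -- coassociativity of deconcatenation
    (∀ x : HW k Ω,
      (TensorProduct.assoc k (HW k Ω) (HW k Ω) (HW k Ω))
          ((deconcat k).rTensor (HW k Ω) (deconcat k x)) =
        (deconcat k).lTensor (HW k Ω) (deconcat k x)) ∧
    -- counitality
    (∀ x : HW k Ω,
      (TensorProduct.lid k (HW k Ω)) ((counitW k).rTensor (HW k Ω) (deconcat k x)) = x ∧
      (TensorProduct.rid k (HW k Ω)) ((counitW k).lTensor (HW k Ω) (deconcat k x)) = x) ∧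
    -- the coproduct is an algebra morphism for the quasi-shuffle product
    (deconcat k (Finsupp.single ([] : List Ω) (1 : k)) =
        Finsupp.single [] 1 ⊗ₜ[k] Finsupp.single [] 1) ∧
    (∀ x y : HW k Ω,
      deconcat k (qshL k Θ x y) = mulHH k Θ (deconcat k x ⊗ₜ[k] deconcat k y)) ∧
    -- the counit is an algebra morphism
    (counitW k (Finsupp.single ([] : List Ω) (1 : k)) = 1) ∧
    (∀ x y : HW k Ω, counitW k (qshL k Θ x y) = counitW k x * counitW k y) ∧
    -- connected filtered by word length: the filtration is increasing and exhaustive, …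
    Monotone (filW k (Ω := Ω)) ∧ (⨆ n, filW k (Ω := Ω) n) = ⊤ ∧
    -- … the quasi-shuffle of words of lengths `≤ p` and `≤ q` has length `≤ p + q`, …
    (∀ p q : ℕ, ∀ x ∈ filW k (Ω := Ω) p, ∀ y ∈ filW k q,
      qshL k Θ x y ∈ filW k (p + q)) ∧
    -- … the coproduct respects the filtration, …
    (∀ n : ℕ, ∀ x ∈ filW k (Ω := Ω) n,
      deconcat k x ∈
        (Finset.range (n + 1)).sup fun p =>
          LinearMap.range
            (TensorProduct.map (filW k (Ω := Ω) p).subtype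
              (filW k (Ω := Ω) (n - p)).subtype)) ∧
    -- … and the degree-0 part is spanned by the empty word (connectedness)
    (filW k (Ω := Ω) 0 = Submodule.span k {Finsupp.single [] 1}) ∧
    -- hence a Hopf algebra: there is an antipode
    (∃ S : HW k Ω →ₗ[k] HW k Ω,
      ∀ x : HW k Ω,
        TensorProduct.lift (qshL k Θ) (S.rTensor (HW k Ω) (deconcat k x)) =
          counitW k x • Finsupp.single [] 1 ∧
        TensorProduct.lift (qshL k Θ) (S.lTensor (HW k Ω) (deconcat k x)) =
          counitW k x • Finsupp.single [] 1) := by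
  have h := quasi_shuffle_words_bialgebra_connected_filtered_hopf_general k Ω Θ hassoc
  exact ⟨h.1 hcomm, h.2⟩
end
end

section
/- Let Ω be a totally ordered alphabet and extend the order to words lexicographically (with u < uv for every nonempty v, and ua v < u b v' whenever a < b are letters). A nonempty word w is Lyndon if for every factorization w = uv into nonempty words one has w < v. Then the shuffle Hopf algebra (H_W, ⧢, ∅, Δ, δ_∅) over a field of characteristic zero is, as a commutative algebra, freely generated by the Lyndon words; i.e. it is a polynomial algebra on the set of Lyndon words (Radford's theorem). -/
open scoped TensorProduct
noncomputable section

variable (k : Type*) [Field k] {Ω : Type*}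

/-- Shuffle product of two words. -/
def shW : List Ω → List Ω → HW k Ω
  | [], v => Finsupp.single v 1
  | u, [] => Finsupp.single u 1
  | a :: u, b :: v =>
      Finsupp.mapDomain (a :: ·) (shW u (b :: v)) +
      Finsupp.mapDomain (b :: ·) (shW (a :: u) v)
  termination_by u v => u.length + v.length

/-- Bilinear extension of the shuffle product to `HW k Ω`. -/
def shL : HW k Ω →ₗ[k] HW k Ω →ₗ[k] HW k Ω :=
  Finsupp.lift (HW k Ω →ₗ[k] HW k Ω) k (List Ω) fun u =>
    Finsupp.lift (HW k Ω) k (List Ω) fun v => shW k u v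

/-- A nonempty word `w` is Lyndon if for every factorization `w = uv` into
nonempty words one has `w < v` in the lexicographic order. -/
def IsLyndon [LinearOrder Ω] (w : List Ω) : Prop :=
  w ≠ [] ∧ ∀ u v : List Ω, u ≠ [] → v ≠ [] → w = u ++ v → List.Lex (· < ·) w v

/-!
Every word is uniquely a concatenation `w = l₁ ⋯ lₙ` of Lyndon words with `l₁ ≥ ⋯ ≥ lₙ`, the last
factor being the least nonempty suffix of `w`. Among the shuffles of `l₁, …, lₙ` the concatenation
`w` is the lexicographically largest: all shuffles are rearrangements of `w`, and shuffling in a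
further `l` that bounds every nonempty suffix of `v` from below gives at most `v l`. In
characteristic zero the coefficient of `w` in `l₁ ⧢ ⋯ ⧢ lₙ` does not vanish. The monomials in the
Lyndon words are therefore triangular with respect to the basis of words; as a word has only
finitely many rearrangements, they form a basis themselves.
-/

section LeadingTerm

variable {ι α R : Type*}

/-- The term of `x` at `a` is the leading one for the relation `r`: it is nonzero, and every other
index in the support of `x` precedes `a`. -/
structure IsLeading [Zero R] (r : α → α → Prop) (x : α →₀ R) (a : α) : Prop where
  apply_ne_zero : x a ≠ 0
  rel : ∀ b, x b ≠ 0 → b ≠ a → r b a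

lemma linearIndependent_of_isLeading [Ring R] [NoZeroDivisors R] (r : α → α → Prop)
    [IsStrictOrder α r] {x : ι → α →₀ R} {f : ι → α} (hf : Function.Injective f)
    (hx : ∀ i, IsLeading r (x i) (f i)) : LinearIndependent R x := by
  let := partialOrderOfSO r
  rw [linearIndependent_iff]
  intro c hc
  by_contra hc₀
  obtain ⟨i, hi, hmax⟩ := c.support.exists_maximalFor f (Finsupp.support_nonempty_iff.2 hc₀)
  have hzero (j : ι) (hj : j ∈ c.support) (hji : j ≠ i) : c j * x j (f i) = 0 := by
    by_contra hne
    have hlt : f i < f j :=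
      (hx j).rel _ (right_ne_zero_of_mul hne) fun h => hji (hf h.symm)
    exact (hlt.trans_le (hmax hj hlt.le)).false
  have hcoeff : ∑ j ∈ c.support, c j * x j (f i) = 0 := by
    simpa [Finsupp.linearCombination_apply, Finsupp.sum, Finsupp.finsetSum_apply]
      using DFunLike.congr_fun hc (f i)
  rw [Finset.sum_eq_single_of_mem i hi hzero] at hcoeff
  exact mul_ne_zero (Finsupp.mem_support_iff.1 hi) (hx i).apply_ne_zero hcoeff

lemma span_range_eq_top_of_isLeading [DivisionRing R] {r : α → α → Prop} (hr : WellFounded r)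
    {x : ι → α →₀ R} {f : ι → α} (hf : Function.Surjective f)
    (hx : ∀ i, IsLeading r (x i) (f i)) : Submodule.span R (Set.range x) = ⊤ := by
  set S := Submodule.span R (Set.range x)
  have single_mem_of_forall (y : α →₀ R)
      (h : ∀ a, y a ≠ 0 → Finsupp.single a 1 ∈ S) : y ∈ S := by
    rw [← y.sum_single]
    refine Submodule.sum_mem _ fun a ha => ?_
    rw [← Finsupp.smul_single_one]
    exact S.smul_mem _ (h a (Finsupp.mem_support_iff.1 ha))
  have single_mem (a : α) : Finsupp.single a (1 : R) ∈ S := by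
    induction a using hr.induction with
    | _ a ih =>
    obtain ⟨i, rfl⟩ := hf a
    have hrest : (x i).erase (f i) ∈ S := by
      refine single_mem_of_forall _ fun b hb => ?_
      have hbi : b ≠ f i := by rintro rfl; simp at hb
      exact ih b ((hx i).rel b (by rwa [Finsupp.erase_ne hbi] at hb) hbi)
    have hlead : x i (f i) • Finsupp.single (f i) (1 : R) ∈ S := by
      rw [Finsupp.smul_single_one, eq_sub_of_add_eq (Finsupp.single_add_erase (f i) (x i))]
      exact S.sub_mem (Submodule.subset_span ⟨i, rfl⟩) hrest
    exact (S.smul_mem_iff (hx i).apply_ne_zero).1 hlead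
  exact eq_top_iff.2 fun y _ => single_mem_of_forall y fun a _ => single_mem a

end LeadingTerm

section ShuffleProduct

lemma shW_nil_left (v : List Ω) : shW k [] v = Finsupp.single v 1 := by
  rw [shW]

lemma shW_nil_right (u : List Ω) : shW k u [] = Finsupp.single u 1 := by
  cases u <;> simp [shW]

/-- Prepending the letter `a` to every word, extended linearly. In the paper's notation the shuffle
product satisfies `au ⧢ bv = a(u ⧢ bv) + b(au ⧢ v)` for all elements `u` and `v`. -/
def prepend (a : Ω) : HW k Ω →ₗ[k] HW k Ω :=
  Finsupp.lmapDomain k k (a :: ·)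

lemma prepend_single (a : Ω) (w : List Ω) (c : k) :
    prepend k a (Finsupp.single w c) = Finsupp.single (a :: w) c :=
  Finsupp.mapDomain_single

lemma shW_cons_cons (a b : Ω) (u v : List Ω) :
    shW k (a :: u) (b :: v) =
      prepend k a (shW k u (b :: v)) + prepend k b (shW k (a :: u) v) := by
  rw [shW]
  rfl

lemma shW_comm (u v : List Ω) : shW k u v = shW k v u := by
  match u, v with
  | [], v => rw [shW_nil_left, shW_nil_right]
  | u, [] => rw [shW_nil_left, shW_nil_right]
  | a :: u, b :: v =>
    rw [shW_cons_cons, shW_cons_cons, shW_comm u (b :: v), shW_comm (a :: u) v, add_comm]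
  termination_by u.length + v.length

lemma shL_single_single (u v : List Ω) (c d : k) :
    shL k (Finsupp.single u c) (Finsupp.single v d) = (c * d) • shW k u v := by
  simp [shL, mul_smul]

lemma shL_single_one_apply (x : HW k Ω) (v w : List Ω) :
    shL k x (Finsupp.single v 1) w = ∑ u ∈ x.support, x u * shW k u v w := by
  simp [shL, Finsupp.sum, Finsupp.finsetSum_apply, LinearMap.sum_apply]

lemma shL_comm (x y : HW k Ω) : shL k x y = shL k y x := by
  induction x using Finsupp.induction_linear with
  | zero => simp
  | add x₁ x₂ h₁ h₂ => simp [h₁, h₂]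
  | single u c =>
    induction y using Finsupp.induction_linear with
    | zero => simp
    | add y₁ y₂ h₁ h₂ => simp [h₁, h₂]
    | single v d => rw [shL_single_single, shL_single_single, shW_comm, mul_comm]

lemma shL_one_left (x : HW k Ω) : shL k (Finsupp.single [] 1) x = x := by
  induction x using Finsupp.induction_linear with
  | zero => simp
  | add x₁ x₂ h₁ h₂ => simp [h₁, h₂]
  | single u c => simp [shL_single_single, shW_nil_left]

lemma shL_one_right (x : HW k Ω) : shL k x (Finsupp.single [] 1) = x := by
  rw [shL_comm, shL_one_left]

lemma shL_prepend_prepend (a b : Ω) (x y : HW k Ω) :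
    shL k (prepend k a x) (prepend k b y) =
      prepend k a (shL k x (prepend k b y)) + prepend k b (shL k (prepend k a x) y) := by
  induction x using Finsupp.induction_linear with
  | zero => simp
  | add x₁ x₂ h₁ h₂ => simp only [map_add, LinearMap.add_apply, h₁, h₂]; abel
  | single u c =>
    induction y using Finsupp.induction_linear with
    | zero => simp
    | add y₁ y₂ h₁ h₂ => simp only [map_add, h₁, h₂]; abel
    | single v d =>
      simp only [prepend_single, shL_single_single, shW_cons_cons, map_smul, smul_add]

lemma shL_shL_prepend_left (a b c : Ω) (x y z : HW k Ω) :
    shL k (shL k (prepend k a x) (prepend k b y)) (prepend k c z) =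
      prepend k a (shL k (shL k x (prepend k b y)) (prepend k c z)) +
      prepend k b (shL k (shL k (prepend k a x) y) (prepend k c z)) +
      prepend k c (shL k (shL k (prepend k a x) (prepend k b y)) z) := by
  simp only [shL_prepend_prepend, map_add, LinearMap.add_apply]
  abel

lemma shL_shL_prepend_right (a b c : Ω) (x y z : HW k Ω) :
    shL k (prepend k a x) (shL k (prepend k b y) (prepend k c z)) =
      prepend k a (shL k x (shL k (prepend k b y) (prepend k c z))) +
      prepend k b (shL k (prepend k a x) (shL k y (prepend k c z))) +
      prepend k c (shL k (prepend k a x) (shL k (prepend k b y) z)) := by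
  simp only [shL_prepend_prepend, map_add]
  abel

lemma shL_assoc_single_one (u v w : List Ω) :
    shL k (shL k (Finsupp.single u 1) (Finsupp.single v 1)) (Finsupp.single w 1) =
      shL k (Finsupp.single u 1) (shL k (Finsupp.single v 1) (Finsupp.single w 1)) := by
  match u, v, w with
  | [], v, w => simp only [shL_one_left]
  | u, [], w => simp only [shL_one_left, shL_one_right]
  | u, v, [] => simp only [shL_one_right]
  | a :: u, b :: v, c :: w =>
    have h_u := shL_assoc_single_one u (b :: v) (c :: w)
    have h_v := shL_assoc_single_one (a :: u) v (c :: w)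
    have h_w := shL_assoc_single_one (a :: u) (b :: v) w
    simp only [← prepend_single] at h_u h_v h_w ⊢
    rw [shL_shL_prepend_left, shL_shL_prepend_right, h_u, h_v, h_w]
  termination_by u.length + v.length + w.length

lemma shL_assoc (x y z : HW k Ω) : shL k (shL k x y) z = shL k x (shL k y z) := by
  induction x using Finsupp.induction_linear with
  | zero => simp
  | add x₁ x₂ h₁ h₂ => simp [h₁, h₂]
  | single u c =>
    induction y using Finsupp.induction_linear with
    | zero => simp
    | add y₁ y₂ h₁ h₂ => simp [h₁, h₂]
    | single v d =>
      induction z using Finsupp.induction_linear with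
      | zero => simp
      | add z₁ z₂ h₁ h₂ => simp [h₁, h₂]
      | single w e =>
        rw [← Finsupp.smul_single_one u c, ← Finsupp.smul_single_one v d,
          ← Finsupp.smul_single_one w e]
        simp only [map_smul, LinearMap.smul_apply, shL_assoc_single_one]

end ShuffleProduct

/-- The space of words, regarded as a commutative algebra under the shuffle product; a copy of
`HW k Ω`, whose pointwise operations are thereby kept apart from the shuffle product. -/
def ShuffleAlgebra (k : Type*) [Field k] (Ω : Type*) := HW k Ω

namespace ShuffleAlgebra

instance : AddCommGroup (ShuffleAlgebra k Ω) := inferInstanceAs (AddCommGroup (HW k Ω))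

instance : Module k (ShuffleAlgebra k Ω) := inferInstanceAs (Module k (HW k Ω))

/-- The identity map from the shuffle algebra to the space of words. -/
def toHW : ShuffleAlgebra k Ω ≃ₗ[k] HW k Ω := LinearEquiv.refl k (HW k Ω)

/-- A word, as an element of the shuffle algebra. -/
def word (w : List Ω) : ShuffleAlgebra k Ω := (toHW k).symm (Finsupp.single w 1)

instance : CommRing (ShuffleAlgebra k Ω) where
  mul x y := (toHW k).symm (shL k (toHW k x) (toHW k y))
  one := word k []
  left_distrib x y z := map_add (shL k x) y z
  right_distrib x y z := LinearMap.map_add₂ (shL k) x y z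
  zero_mul x := LinearMap.map_zero₂ (shL k) x
  mul_zero x := map_zero (shL k x)
  mul_assoc x y z := shL_assoc k x y z
  one_mul x := shL_one_left k x
  mul_one x := shL_one_right k x
  mul_comm x y := shL_comm k x y
  zsmul := zsmulRec
  sub_eq_add_neg := sub_eq_add_neg
  neg_add_cancel := neg_add_cancel

instance : Algebra k (ShuffleAlgebra k Ω) :=
  Algebra.ofModule (fun c x y => LinearMap.map_smul₂ (shL k) c x y)
    (fun c x y => map_smul (shL k x) c y)

lemma toHW_mul (x y : ShuffleAlgebra k Ω) :
    toHW k (x * y) = shL k (toHW k x) (toHW k y) := rfl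

lemma toHW_one : toHW k (1 : ShuffleAlgebra k Ω) = Finsupp.single [] 1 := rfl

lemma toHW_word (w : List Ω) : toHW k (word k w) = Finsupp.single w 1 := rfl

end ShuffleAlgebra

section Lex

variable [LinearOrder Ω]

lemma list_cons_le_cons_iff {a b : Ω} {u v : List Ω} :
    a :: u ≤ b :: v ↔ a < b ∨ a = b ∧ u ≤ v := by
  rw [← not_lt, ← not_lt]
  exact List.cons_le_cons_iff

lemma list_le_append (u v : List Ω) : u ≤ u ++ v :=
  not_lt.1 List.le_append_left

lemma prefix_or_append_lt_of_lt {u v : List Ω} (h : u < v) (w : List Ω) :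
    u <+: v ∨ u ++ w < v := by
  induction u generalizing v with
  | nil => exact .inl List.nil_prefix
  | cons a u ih =>
    cases v with
    | nil => exact absurd h (List.not_lt_nil _)
    | cons b v =>
      rcases List.cons_lt_cons_iff.1 h with hab | ⟨rfl, huv⟩
      · exact .inr (List.cons_lt_cons_iff.2 (.inl hab))
      · exact (ih huv).imp (List.prefix_cons_inj a).2
          fun hlt => List.cons_lt_cons_iff.2 (.inr ⟨rfl, hlt⟩)

end Lex

section Shuffles

/-- The shuffles of two words, with multiplicity: the terms of the product `u ⧢ v`. Counting them in
`ℕ` shows that the coefficients of `u ⧢ v` are multiplicities, so that in characteristic zero the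
terms cannot cancel. -/
def shuffles : List Ω → List Ω → Multiset (List Ω)
  | [], v => {v}
  | u, [] => {u}
  | a :: u, b :: v => (shuffles u (b :: v)).map (a :: ·) + (shuffles (a :: u) v).map (b :: ·)
  termination_by u v => u.length + v.length

lemma shuffles_nil_left (v : List Ω) : shuffles [] v = {v} := by
  rw [shuffles]

lemma shuffles_nil_right (u : List Ω) : shuffles u [] = {u} := by
  cases u <;> simp [shuffles]

lemma mem_shuffles_cons_cons {a b : Ω} {u v w : List Ω} :
    w ∈ shuffles (a :: u) (b :: v) ↔
      (∃ w' ∈ shuffles u (b :: v), a :: w' = w) ∨ ∃ w' ∈ shuffles (a :: u) v, b :: w' = w := by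
  rw [shuffles, Multiset.mem_add, Multiset.mem_map, Multiset.mem_map]

lemma cons_mem_shuffles_left (a : Ω) {u v w : List Ω} (h : w ∈ shuffles u v) :
    a :: w ∈ shuffles (a :: u) v := by
  cases v with
  | nil => simpa [shuffles_nil_right] using h
  | cons b v => exact mem_shuffles_cons_cons.2 (.inl ⟨w, h, rfl⟩)

lemma cons_mem_shuffles_right (b : Ω) {u v w : List Ω} (h : w ∈ shuffles u v) :
    b :: w ∈ shuffles u (b :: v) := by
  cases u with
  | nil => simpa [shuffles_nil_left] using h
  | cons a u => exact mem_shuffles_cons_cons.2 (.inr ⟨w, h, rfl⟩)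

lemma append_mem_shuffles (u v : List Ω) : u ++ v ∈ shuffles u v := by
  induction u with
  | nil => simp [shuffles_nil_left]
  | cons a u ih => exact cons_mem_shuffles_left a ih

lemma append_mem_shuffles_swap (u v : List Ω) : v ++ u ∈ shuffles u v := by
  induction v with
  | nil => simp [shuffles_nil_right]
  | cons b v ih => exact cons_mem_shuffles_right b ih

lemma perm_of_mem_shuffles {u v w : List Ω} (h : w ∈ shuffles u v) : w.Perm (u ++ v) := by
  fun_induction shuffles u v generalizing w with
  | case1 v => simp_all
  | case2 u => simp_all
  | case3 a u b v ih_u ih_v =>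
    simp only [Multiset.mem_add, Multiset.mem_map] at h
    rcases h with ⟨w', hw', rfl⟩ | ⟨w', hw', rfl⟩
    · exact (ih_u hw').cons a
    · exact ((ih_v hw').cons b).trans List.perm_middle.symm

lemma shW_eq_sum_shuffles (u v : List Ω) :
    shW k u v = ((shuffles u v).map fun w => Finsupp.single w 1).sum := by
  fun_induction shuffles u v with
  | case1 v => simp [shW_nil_left]
  | case2 u => simp [shW_nil_right]
  | case3 a u b v ih_u ih_v =>
    simp [shW_cons_cons, ih_u, ih_v, map_multiset_sum, prepend_single]

lemma shW_apply [DecidableEq Ω] (u v w : List Ω) : shW k u v w = (shuffles u v).count w := by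
  rw [shW_eq_sum_shuffles]
  induction shuffles u v using Multiset.induction with
  | empty => simp
  | cons t s ih =>
    simp [ih, Finsupp.single_apply, Multiset.count_cons, add_comm, eq_comm]

lemma mem_shuffles_of_shW_apply_ne_zero {u v w : List Ω} (h : shW k u v w ≠ 0) :
    w ∈ shuffles u v := by
  classical
  contrapose! h
  rw [shW_apply, Multiset.count_eq_zero_of_notMem h, Nat.cast_zero]

lemma shW_apply_append_ne_zero [CharZero k] (u v : List Ω) : shW k u v (u ++ v) ≠ 0 := by
  classical
  rw [shW_apply, Nat.cast_ne_zero]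
  exact Multiset.count_ne_zero.2 (append_mem_shuffles u v)

variable [LinearOrder Ω]

lemma exists_lt_mem_shuffles_of_lt {u v l w : List Ω} (h : w ∈ shuffles u l)
    (hlen : u.length = v.length) (huv : u < v) : ∃ w' ∈ shuffles v l, w < w' := by
  match u, v, l with
  | [], [], _ => exact absurd huv (lt_irrefl _)
  | u, v, [] =>
    obtain rfl : w = u := by simpa [shuffles_nil_right] using h
    exact ⟨v, by simp [shuffles_nil_right], huv⟩
  | a :: u, b :: v, c :: l =>
    rcases mem_shuffles_cons_cons.1 h with ⟨w, hw, rfl⟩ | ⟨w, hw, rfl⟩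
    · rcases List.cons_lt_cons_iff.1 huv with hab | ⟨rfl, huv'⟩
      · exact ⟨_, append_mem_shuffles _ _, List.cons_lt_cons_iff.2 (.inl hab)⟩
      · obtain ⟨w', hw', hlt⟩ := exists_lt_mem_shuffles_of_lt hw (by simpa using hlen) huv'
        exact ⟨_, cons_mem_shuffles_left a hw', List.cons_lt_cons_iff.2 (.inr ⟨rfl, hlt⟩)⟩
    · obtain ⟨w', hw', hlt⟩ := exists_lt_mem_shuffles_of_lt hw hlen huv
      exact ⟨_, cons_mem_shuffles_right c hw', List.cons_lt_cons_iff.2 (.inr ⟨rfl, hlt⟩)⟩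
  termination_by u.length + l.length

/-- A letter taken from `v` is matched by the first letter of `u` until the two words differ; the
letters already matched join `x`. -/
lemma exists_ge_mem_shuffles_append {x u v w : List Ω} (h : w ∈ shuffles (x ++ u) v)
    (hvu : v ≤ u) : ∃ w' ∈ shuffles u (x ++ v), w ≤ w' := by
  match x, v with
  | [], v => exact ⟨w, h, le_rfl⟩
  | x, [] =>
    obtain rfl : w = x ++ u := by simpa [shuffles_nil_right] using h
    exact ⟨x ++ u, by simpa using append_mem_shuffles_swap u x, le_rfl⟩
  | c :: x, b :: v =>
    rcases mem_shuffles_cons_cons.1 h with ⟨w, hw, rfl⟩ | ⟨w, hw, rfl⟩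
    · obtain ⟨w', hw', hle⟩ := exists_ge_mem_shuffles_append hw hvu
      exact ⟨_, cons_mem_shuffles_right c hw', List.cons_le_cons c hle⟩
    · cases u with
      | nil => exact absurd hvu (not_le.2 (List.nil_lt_cons b v))
      | cons d u =>
        rcases list_cons_le_cons_iff.1 hvu with hbd | ⟨rfl, hvu'⟩
        · exact ⟨_, append_mem_shuffles _ _, list_cons_le_cons_iff.2 (.inl hbd)⟩
        · obtain ⟨w', hw', hle⟩ := exists_ge_mem_shuffles_append (x := c :: x ++ [b]) (u := u)
            (by simpa using hw) hvu'
          exact ⟨_, cons_mem_shuffles_left b (by simpa using hw'), List.cons_le_cons b hle⟩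
  termination_by x.length + u.length + v.length

lemma exists_le_cons_mem_shuffles {a : Ω} {v l w : List Ω} (h : w ∈ shuffles (a :: v) l)
    (hl : l ≤ a :: v) : ∃ w' ∈ shuffles v l, w ≤ a :: w' := by
  cases l with
  | nil =>
    obtain rfl : w = a :: v := by simpa [shuffles_nil_right] using h
    exact ⟨v, by simp [shuffles_nil_right], le_rfl⟩
  | cons b l =>
    rcases mem_shuffles_cons_cons.1 h with ⟨w, hw, rfl⟩ | ⟨w, hw, rfl⟩
    · exact ⟨w, hw, le_rfl⟩
    · rcases list_cons_le_cons_iff.1 hl with hba | ⟨rfl, hlv⟩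
      · exact ⟨_, append_mem_shuffles _ _, list_cons_le_cons_iff.2 (.inl hba)⟩
      · obtain ⟨w', hw', hle⟩ := exists_ge_mem_shuffles_append (x := [b]) hw hlv
        exact ⟨w', hw', List.cons_le_cons b hle⟩

end Shuffles

section Lyndon

/-- The nonempty suffixes of a word. The least of them is the last factor of its Lyndon
factorization. -/
def nonemptySuffixes (v : List Ω) : Set (List Ω) := {p | p ≠ [] ∧ p <:+ v}

variable [LinearOrder Ω]

lemma le_append_of_mem_shuffles {v l w : List Ω} (h : w ∈ shuffles v l)
    (hl : l ∈ lowerBounds (nonemptySuffixes v)) : w ≤ v ++ l := by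
  induction v generalizing w with
  | nil => simp_all [shuffles_nil_left]
  | cons a v ih =>
    have hl_cons : l ≤ a :: v := hl ⟨List.cons_ne_nil a v, List.suffix_rfl⟩
    have hl_tail : l ∈ lowerBounds (nonemptySuffixes v) :=
      fun p hp => hl ⟨hp.1, hp.2.trans (List.suffix_cons a v)⟩
    obtain ⟨w', hw', hle⟩ := exists_le_cons_mem_shuffles h hl_cons
    exact hle.trans (List.cons_le_cons a (ih hw' hl_tail))

lemma mem_lowerBounds_nonemptySuffixes_append {l u v : List Ω}
    (hu : l ∈ lowerBounds (nonemptySuffixes u)) (hv : l ∈ lowerBounds (nonemptySuffixes v)) :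
    l ∈ lowerBounds (nonemptySuffixes (u ++ v)) := by
  rintro p ⟨hp, t, ht⟩
  rcases List.append_eq_append_iff.1 ht with ⟨q, rfl, rfl⟩ | ⟨q, rfl, rfl⟩
  · rcases eq_or_ne q [] with rfl | hq
    · exact hv ⟨hp, List.suffix_rfl⟩
    · exact (hu ⟨hq, List.suffix_append t q⟩).trans (list_le_append q v)
  · exact hv ⟨hp, List.suffix_append q p⟩

lemma mem_lowerBounds_nonemptySuffixes_flatten {l : List Ω} {L : List (List Ω)}
    (hL : ∀ m ∈ L, l ∈ lowerBounds (nonemptySuffixes m)) :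
    l ∈ lowerBounds (nonemptySuffixes L.flatten) := by
  induction L with
  | nil => rintro p ⟨hp, hs⟩; simp_all
  | cons m L ih =>
    obtain ⟨hm, hL⟩ := List.forall_mem_cons.1 hL
    exact mem_lowerBounds_nonemptySuffixes_append hm (ih hL)

lemma isLyndon_iff_isLeast {w : List Ω} : IsLyndon w ↔ IsLeast (nonemptySuffixes w) w := by
  refine ⟨fun ⟨hw, hlt⟩ => ⟨⟨hw, List.suffix_rfl⟩, ?_⟩, fun ⟨⟨hw, _⟩, hle⟩ => ⟨hw, ?_⟩⟩
  · rintro p ⟨hp, t, rfl⟩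
    rcases eq_or_ne t [] with rfl | ht
    · exact le_rfl
    · exact le_of_lt (hlt t p ht hp rfl)
  · intro u v hu hv huv
    refine lt_of_le_of_ne (hle ⟨hv, u, huv.symm⟩) ?_
    rintro rfl
    exact hu (List.self_eq_append_left.1 huv)

lemma exists_isLeast_nonemptySuffixes {w : List Ω} (hw : w ≠ []) :
    ∃ l, IsLeast (nonemptySuffixes w) l := by
  have hfin : (nonemptySuffixes w).Finite :=
    w.tails.finite_toSet.subset fun p hp => (List.mem_tails p w).2 hp.2
  obtain ⟨l, hl, hle⟩ := Set.exists_min_image _ id hfin ⟨w, hw, List.suffix_rfl⟩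
  exact ⟨l, hl, hle⟩

lemma isLyndon_of_isLeast {l w : List Ω} (h : IsLeast (nonemptySuffixes w) l) : IsLyndon l :=
  isLyndon_iff_isLeast.2
    ⟨⟨h.1.1, List.suffix_rfl⟩, fun _ hp => h.2 ⟨hp.1, hp.2.trans h.1.2⟩⟩

lemma IsLyndon.le_of_isLeast_append {l m w : List Ω} (hm : IsLyndon m) (hmw : m <:+ w)
    (hl : IsLeast (nonemptySuffixes (w ++ l)) l) : l ≤ m := by
  by_contra! hml
  have hle : l ≤ m ++ l := hl.2 ⟨by simp [hm.1], List.suffix_append_self_iff.2 hmw⟩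
  rcases prefix_or_append_lt_of_lt hml l with ⟨t, rfl⟩ | hlt
  · have ht : t ≠ [] := by rintro rfl; simp at hml
    have hlt : m ++ t < t := (isLyndon_of_isLeast hl).2 m t hm.1 ht rfl
    exact (hle.trans_lt (List.append_left_lt hlt)).false
  · exact (hle.trans_lt hlt).false

/-- A weakly decreasing list of Lyndon words, that is, a Lyndon factorization of its
concatenation. -/
structure IsDecreasingLyndon (L : List (List Ω)) : Prop where
  isLyndon : ∀ l ∈ L, IsLyndon l
  pairwise : L.Pairwise (· ≥ ·)

lemma isDecreasingLyndon_nil : IsDecreasingLyndon ([] : List (List Ω)) :=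
  ⟨by simp, .nil⟩

lemma isDecreasingLyndon_concat {L : List (List Ω)} {l : List Ω} :
    IsDecreasingLyndon (L ++ [l]) ↔ IsDecreasingLyndon L ∧ IsLyndon l ∧ ∀ m ∈ L, l ≤ m := by
  constructor
  · rintro ⟨hL, hs⟩
    simp only [List.pairwise_append, List.mem_singleton, forall_eq] at hs
    exact ⟨⟨fun m hm => hL m (by simp [hm]), hs.1⟩, hL l (by simp), hs.2.2⟩
  · rintro ⟨⟨hL, hs⟩, hl, hle⟩
    refine ⟨?_, List.pairwise_append.2 ⟨hs, List.pairwise_singleton _ l, by simpa using hle⟩⟩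
    simpa [or_imp, forall_and] using ⟨hL, hl⟩

lemma IsDecreasingLyndon.mem_lowerBounds {L : List (List Ω)} {l : List Ω}
    (h : IsDecreasingLyndon (L ++ [l])) : l ∈ lowerBounds (nonemptySuffixes L.flatten) := by
  obtain ⟨hL, -, hle⟩ := isDecreasingLyndon_concat.1 h
  exact mem_lowerBounds_nonemptySuffixes_flatten fun m hm p hp =>
    (hle m hm).trans ((isLyndon_iff_isLeast.1 (hL.isLyndon m hm)).2 hp)

lemma IsDecreasingLyndon.isLeast {L : List (List Ω)} {l : List Ω}
    (h : IsDecreasingLyndon (L ++ [l])) : IsLeast (nonemptySuffixes (L ++ [l]).flatten) l := by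
  have hl : IsLyndon l := h.isLyndon l (by simp)
  rw [List.flatten_append, List.flatten_singleton]
  exact ⟨⟨hl.1, List.suffix_append _ l⟩, mem_lowerBounds_nonemptySuffixes_append
    h.mem_lowerBounds (isLyndon_iff_isLeast.1 hl).2⟩

lemma IsDecreasingLyndon.eq_nil_of_flatten_eq_nil {L : List (List Ω)} (h : IsDecreasingLyndon L)
    (hL : L.flatten = []) : L = [] :=
  List.eq_nil_iff_forall_not_mem.2 fun l hl =>
    (h.isLyndon l hl).1 (List.flatten_eq_nil_iff.1 hL l hl)

lemma IsDecreasingLyndon.eq_of_flatten_eq {L L' : List (List Ω)} (hL : IsDecreasingLyndon L)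
    (hL' : IsDecreasingLyndon L') (h : L.flatten = L'.flatten) : L = L' := by
  induction L using List.reverseRecOn generalizing L' with
  | nil => exact (hL'.eq_nil_of_flatten_eq_nil h.symm).symm
  | append_singleton L l ih =>
    rcases List.eq_nil_or_concat L' with rfl | ⟨L', l', rfl⟩
    · exact hL.eq_nil_of_flatten_eq_nil h
    · rw [List.concat_eq_append] at *
      obtain rfl : l = l' := (h ▸ hL.isLeast).unique hL'.isLeast
      simp only [List.flatten_append, List.append_cancel_right_eq] at h
      rw [ih (isDecreasingLyndon_concat.1 hL).1 (isDecreasingLyndon_concat.1 hL').1 h]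

lemma exists_isDecreasingLyndon_flatten_eq (w : List Ω) :
    ∃ L, IsDecreasingLyndon L ∧ L.flatten = w := by
  rcases eq_or_ne w [] with rfl | hw
  · exact ⟨[], isDecreasingLyndon_nil, rfl⟩
  obtain ⟨l, hl⟩ := exists_isLeast_nonemptySuffixes hw
  obtain ⟨hl₀, w', rfl⟩ := hl.1
  have : w'.length < (w' ++ l).length := by simpa [List.length_pos_iff] using hl₀
  obtain ⟨L, hL, rfl⟩ := exists_isDecreasingLyndon_flatten_eq w'
  refine ⟨L ++ [l], isDecreasingLyndon_concat.2 ⟨hL, isLyndon_of_isLeast hl, ?_⟩, by simp⟩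
  rcases List.eq_nil_or_concat L with rfl | ⟨L, m, rfl⟩
  · simp
  · rw [List.concat_eq_append] at *
    have hm : l ≤ m := (hL.isLyndon m (by simp)).le_of_isLeast_append (by simp) hl
    simpa [or_imp, forall_and, hm] using
      fun p hp => hm.trans ((isDecreasingLyndon_concat.1 hL).2.2 p hp)
  termination_by w.length

/-- The type of Lyndon words over `Ω`. -/
abbrev LyndonWord (Ω : Type*) [LinearOrder Ω] := {w : List Ω // IsLyndon w}

/-- The word obtained by concatenating the elements of a multiset of Lyndon words in weakly
decreasing order. -/
def decreasingConcat (s : Multiset (LyndonWord Ω)) : List Ω :=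
  ((s.sort (· ≥ ·)).map Subtype.val).flatten

lemma isDecreasingLyndon_sort (s : Multiset (LyndonWord Ω)) :
    IsDecreasingLyndon ((s.sort (· ≥ ·)).map Subtype.val) where
  isLyndon := List.forall_mem_map.2 fun l _ => l.2
  pairwise := List.pairwise_map.2 (s.pairwise_sort (· ≥ ·))

lemma decreasingConcat_injective :
    Function.Injective (decreasingConcat : Multiset (LyndonWord Ω) → List Ω) := by
  intro s t h
  have hmap := (isDecreasingLyndon_sort s).eq_of_flatten_eq (isDecreasingLyndon_sort t) h
  rw [← s.sort_eq (· ≥ ·), List.map_injective_iff.2 Subtype.val_injective hmap, Multiset.sort_eq]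

lemma decreasingConcat_surjective :
    Function.Surjective (decreasingConcat : Multiset (LyndonWord Ω) → List Ω) := by
  intro w
  obtain ⟨L, ⟨hL, hs⟩, rfl⟩ := exists_isDecreasingLyndon_flatten_eq w
  lift L to List (LyndonWord Ω) using hL
  have hs' : L.Pairwise (· ≥ ·) := (List.pairwise_map (f := Subtype.val)).1 hs
  exact ⟨L, by rw [decreasingConcat, Multiset.coe_sort, List.mergeSort_eq_self _ hs']⟩

end Lyndon

section Radford

variable [LinearOrder Ω]

/-- The strict order underlying triangularity: `u` is a rearrangement of `v` that is
lexicographically smaller. Unlike the lexicographic order itself, it is well-founded. -/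
def PermLT (u v : List Ω) : Prop := u.Perm v ∧ u < v

instance : IsStrictOrder (List Ω) PermLT where
  irrefl u h := lt_irrefl u h.2
  trans _ _ _ h₁ h₂ := ⟨h₁.1.trans h₂.1, h₁.2.trans h₂.2⟩

lemma wellFounded_permLT : WellFounded (PermLT : List Ω → List Ω → Prop) := by
  refine ⟨fun v => ?_⟩
  have hfin : {u | Relation.TransGen PermLT u v}.Finite := by
    rw [Relation.transGen_eq_self]
    exact v.permutations.finite_toSet.subset fun u hu => List.mem_permutations.2 hu.1
  exact (Set.WellFoundedOn.acc_iff_wellFoundedOn.out 0 2).2 hfin.wellFoundedOn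

lemma permLT_append_of_mem_shuffles {u v l w : List Ω} (huv : PermLT u v)
    (hl : l ∈ lowerBounds (nonemptySuffixes v)) (hw : w ∈ shuffles u l) : PermLT w (v ++ l) := by
  obtain ⟨w', hw', hlt⟩ := exists_lt_mem_shuffles_of_lt hw huv.1.length_eq huv.2
  exact ⟨(perm_of_mem_shuffles hw).trans (huv.1.append_right l),
    hlt.trans_le (le_append_of_mem_shuffles hw' hl)⟩

variable {k}

lemma IsLeading.shL_single_one [CharZero k] {x : HW k Ω} {v l : List Ω}
    (hx : IsLeading PermLT x v) (hl : l ∈ lowerBounds (nonemptySuffixes v)) :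
    IsLeading PermLT (shL k x (Finsupp.single l 1)) (v ++ l) := by
  have permLT_of_mem {u w : List Ω} (hu : x u ≠ 0) (huv : u ≠ v) (hw : w ∈ shuffles u l) :
      PermLT w (v ++ l) :=
    permLT_append_of_mem_shuffles (hx.rel u hu huv) hl hw
  refine ⟨?_, fun w hw hne => ?_⟩
  · rw [shL_single_one_apply,
      Finset.sum_eq_single_of_mem v (Finsupp.mem_support_iff.2 hx.apply_ne_zero)]
    · exact mul_ne_zero hx.apply_ne_zero (shW_apply_append_ne_zero k v l)
    · intro u hu huv
      by_contra hne
      have hmem := mem_shuffles_of_shW_apply_ne_zero k (right_ne_zero_of_mul hne)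
      exact (permLT_of_mem (Finsupp.mem_support_iff.1 hu) huv hmem).2.false
  · rw [shL_single_one_apply] at hw
    obtain ⟨u, hu, huw⟩ := Finset.exists_ne_zero_of_sum_ne_zero hw
    have hmem := mem_shuffles_of_shW_apply_ne_zero k (right_ne_zero_of_mul huw)
    rcases eq_or_ne u v with rfl | huv
    · exact ⟨perm_of_mem_shuffles hmem,
        lt_of_le_of_ne (le_append_of_mem_shuffles hmem hl) hne⟩
    · exact permLT_of_mem (Finsupp.mem_support_iff.1 hu) huv hmem

open ShuffleAlgebra

lemma IsDecreasingLyndon.isLeading_prod [CharZero k] {L : List (List Ω)}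
    (hL : IsDecreasingLyndon L) :
    IsLeading PermLT (toHW k (L.map (word k)).prod) L.flatten := by
  induction L using List.reverseRecOn with
  | nil =>
    rw [List.map_nil, List.prod_nil, List.flatten_nil, toHW_one]
    exact ⟨by simp, fun w hw hne => absurd (Finsupp.single_eq_of_ne hne) hw⟩
  | append_singleton L l ih =>
    rw [List.map_append, List.prod_append, List.map_singleton, List.prod_singleton, toHW_mul,
      toHW_word, List.flatten_append, List.flatten_singleton]
    exact (ih (isDecreasingLyndon_concat.1 hL).1).shL_single_one hL.mem_lowerBounds

/-- The algebra homomorphism from the polynomial algebra on the Lyndon words to the shuffle algebra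
that evaluates each variable at the word indexing it. -/
def lyndonHom (k : Type*) [Field k] (Ω : Type*) [LinearOrder Ω] :
    MvPolynomial (LyndonWord Ω) k →ₐ[k] ShuffleAlgebra k Ω :=
  MvPolynomial.aeval fun w => word k w

lemma lyndonHom_monomial (s : Multiset (LyndonWord Ω)) :
    lyndonHom k Ω (MvPolynomial.monomial (Multiset.toFinsupp s) 1) =
      (((s.sort (· ≥ ·)).map Subtype.val).map (word k)).prod := by
  have hmonomial : MvPolynomial.monomial (Multiset.toFinsupp s) (1 : k) =
      (s.map MvPolynomial.X).prod := by
    rw [Finset.prod_multiset_map_count, ← MvPolynomial.prod_X_pow_eq_monomial]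
    rfl
  rw [hmonomial, map_multiset_prod, Multiset.map_map, List.map_map, ← Multiset.prod_coe,
    ← Multiset.map_coe, Multiset.sort_eq]
  simp [lyndonHom, Function.comp_def]

lemma isLeading_lyndonHom_monomial [CharZero k] (s : Multiset (LyndonWord Ω)) :
    IsLeading PermLT
      (toHW k (lyndonHom k Ω (MvPolynomial.monomial (Multiset.toFinsupp s) 1)))
      (decreasingConcat s) := by
  rw [lyndonHom_monomial]
  exact (isDecreasingLyndon_sort s).isLeading_prod

lemma bijective_toHW_comp_lyndonHom [CharZero k] :
    Function.Bijective ((toHW k).toLinearMap ∘ₗ (lyndonHom k Ω).toLinearMap) := by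
  let monomials := (MvPolynomial.basisMonomials (LyndonWord Ω) k).reindex
    Multiset.toFinsupp.symm.toEquiv
  have hlead (s : Multiset (LyndonWord Ω)) :
      IsLeading PermLT (toHW k (lyndonHom k Ω (monomials s))) (decreasingConcat s) := by
    simpa [monomials] using isLeading_lyndonHom_monomial s
  exact LinearMap.bijective_of_linearIndependent_of_span_eq_top monomials.span_eq
    (linearIndependent_of_isLeading PermLT decreasingConcat_injective hlead)
    (span_range_eq_top_of_isLeading wellFounded_permLT decreasingConcat_surjective hlead)

end Radford

/-- **Radford's theorem.**  Over a field of characteristic zero, the shuffle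
algebra of words over a totally ordered alphabet is, as a commutative algebra,
freely generated by the Lyndon words: there is a `k`-linear bijection from the
polynomial algebra on the set of Lyndon words which sends `1` to the empty word,
is multiplicative (from the polynomial product to the shuffle product `⧢`), and
sends the variable indexed by a Lyndon word `w` to the word `w`. -/
theorem radford_shuffle_polynomial_on_lyndon_words
    (k : Type*) [Field k] [CharZero k] (Ω : Type*) [LinearOrder Ω] :
    ∃ Φ : MvPolynomial {w : List Ω // IsLyndon w} k →ₗ[k] HW k Ω,
      Φ 1 = Finsupp.single [] 1 ∧
      (∀ p q : MvPolynomial {w : List Ω // IsLyndon w} k,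
        Φ (p * q) = shL k (Φ p) (Φ q)) ∧
      (∀ w : {w : List Ω // IsLyndon w},
        Φ (MvPolynomial.X w) = Finsupp.single (w : List Ω) 1) ∧
      Function.Bijective Φ := by
  refine ⟨(ShuffleAlgebra.toHW k).toLinearMap ∘ₗ (lyndonHom k Ω).toLinearMap, ?_, ?_, ?_,
    bijective_toHW_comp_lyndonHom⟩
  · simp [ShuffleAlgebra.toHW_one]
  · simp [ShuffleAlgebra.toHW_mul]
  · simp [lyndonHom, ShuffleAlgebra.toHW_word]
end
end

section
/- Let k be a field of characteristic zero, Ω an alphabet with a commutative associative operation Θ, and H_W the free k-vector space on words over Ω. Define the linear map êxp : H_W → H_W by êxp(∅) = ∅ and, for a word w = b_1···b_n of length n, êxp(w) = Σ_{(j_1,...,j_l) composition of n} (1/(j_1!···j_l!)) Θ(b_1,...,b_{j_1})·Θ(b_{j_1+1},...,b_{j_1+j_2})···Θ(b_{n−j_l+1},...,b_n), where Θ(a) = a and Θ(a_1,...,a_m) denotes the iterated Θ-product of the letters and the juxtaposition denotes concatenation of the resulting letters. Then êxp is an isomorphism of Hopf algebras from the shuffle Hopf algebra (H_W, ⧢,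 ∅, Δ, δ_∅) to the quasi-shuffle Hopf algebra (H_W, ⧢_Θ, ∅, Δ, δ_∅). -/
open scoped TensorProduct
noncomputable section

variable (k : Type*) [Field k] {Ω : Type*}

/-- The iterated `Θ`-product of the letters of a (nonempty) block:
`Θ(a_1,…,a_m)`; on a single letter it is that letter. -/
def contract [Inhabited Ω] (Θ : Ω → Ω → Ω) : List Ω → Ω
  | [] => default
  | a :: t => t.foldl Θ a

/-- Hoffman's exponential on a basis word `w = b_1 ⋯ b_n`:
`êxp(w) = Σ_{(j_1,…,j_l) composition of n} (1/(j_1!⋯j_l!)) Θ(b_1,…,b_{j_1}) ⋯ Θ(b_{n-j_l+1},…,b_n)`. -/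
def expW [Inhabited Ω] (Θ : Ω → Ω → Ω) (w : List Ω) : HW k Ω :=
  ∑ c : Composition w.length,
    ((c.blocks.map Nat.factorial).prod : k)⁻¹ •
      Finsupp.single ((w.splitWrtComposition c).map (contract Θ)) 1

/-- The linear extension `êxp : H_W → H_W` of Hoffman's exponential. -/
def expL [Inhabited Ω] (Θ : Ω → Ω → Ω) : HW k Ω →ₗ[k] HW k Ω :=
  Finsupp.lift (HW k Ω) k (List Ω) fun w => expW k Θ w

/-!
Splitting a composition at its first block gives
`êxp(a w) = Σ_{pq = w} B(a p) êxp(q)`, where `B(p)` prepends the letter `Θ(p)` with weight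
`1 / |p|!` and `B(∅) = 0`. Deconcatenation is a morphism for the shuffle product, and `B` does
not see the order of the letters, so `B` applied to the `C(|p| + |p'|, |p|)` shuffles of `p` and
`p'` gives `C(|p| + |p'|, |p|) B(p p')`; hence, for nonempty `u` and `v`,

  `êxp(u ⧢ v) = Σ_{pq = u} Σ_{p'q' = v} C(|p| + |p'|, |p|) B(p p') êxp(q ⧢ q')`.

The quasi-shuffle product `êxp(u) ⧢_Θ êxp(v)` satisfies the same recursion: its three summands
account for `p' = ∅`, for `p = ∅`, and, as `C(m + n, m) / (m + n)! = 1 / (m! n!)`, for `p` and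
`p'` both nonempty. For the coproduct one compares the two sides by induction on the length, using
`Δ(B(p) x) = B(p) x ⊗ ∅ + (id ⊗ B(p)) Δ(x)`. Bijectivity holds because `êxp(w) - w`
only involves words shorter than `w`.
-/

open Finsupp

namespace QuasiShuffle

section Factorizations

variable {M N : Type*} [AddCommMonoid M] [AddCommMonoid N]

/-- The sum of `f p q` over all factorizations `w = p ++ q` of a word, as in the deconcatenation
coproduct. -/
def splitSum (f : List Ω → List Ω → M) (w : List Ω) : M :=
  ∑ i ∈ Finset.range (w.length + 1), f (w.take i) (w.drop i)

theorem splitSum_nil (f : List Ω → List Ω → M) : splitSum f [] = f [] [] := by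
  simp [splitSum]

theorem splitSum_cons (f : List Ω → List Ω → M) (a : Ω) (w : List Ω) :
    splitSum f (a :: w) = f [] (a :: w) + splitSum (fun p q => f (a :: p) q) w := by
  rw [splitSum, List.length_cons, Finset.sum_range_succ', add_comm]
  rfl

theorem splitSum_congr {f g : List Ω → List Ω → M} {w : List Ω}
    (h : ∀ p q, p ++ q = w → f p q = g p q) : splitSum f w = splitSum g w :=
  Finset.sum_congr rfl fun i _ => h _ _ (List.take_append_drop i w)

theorem splitSum_add (f g : List Ω → List Ω → M) (w : List Ω) :
    splitSum (fun p q => f p q + g p q) w = splitSum f w + splitSum g w :=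
  Finset.sum_add_distrib

theorem map_splitSum {F : Type*} [FunLike F M N] [AddMonoidHomClass F M N] (T : F)
    (f : List Ω → List Ω → M) (w : List Ω) :
    T (splitSum f w) = splitSum (fun p q => T (f p q)) w :=
  map_sum T _ _

theorem splitSum_comm (f : List Ω → List Ω → List Ω → List Ω → M) (u v : List Ω) :
    splitSum (fun p q => splitSum (f p q) v) u =
      splitSum (fun p' q' => splitSum (fun p q => f p q p' q') u) v :=
  Finset.sum_comm

theorem splitSum_assoc (f : List Ω → List Ω → List Ω → M) (w : List Ω) :
    splitSum (fun p q => splitSum (f p) q) w =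
      splitSum (fun r t => splitSum (fun p s => f p s t) r) w := by
  induction w generalizing f with
  | nil => simp only [splitSum_nil]
  | cons a w ih => simp only [splitSum_cons, splitSum_nil, splitSum_add, ih, add_assoc]

end Factorizations

section Shuffle

variable {M N : Type*} [AddCommMonoid M] [Module k M] [AddCommMonoid N] [Module k N]

/-- The sum of `f w` over all shuffles `w` of two words, counted with multiplicity: the value at
`u ⧢ v` of the linear extension of `f`. -/
def shuffleSum (f : List Ω → M) (u v : List Ω) : M :=
  linearCombination k f (shW k u v)

theorem shuffleSum_nil_left (f : List Ω → M) (v : List Ω) : shuffleSum k f [] v = f v := by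
  simp [shuffleSum, shW]

theorem shuffleSum_nil_right (f : List Ω → M) (u : List Ω) : shuffleSum k f u [] = f u := by
  cases u <;> simp [shuffleSum, shW]

theorem shuffleSum_cons_cons (f : List Ω → M) (a b : Ω) (u v : List Ω) :
    shuffleSum k f (a :: u) (b :: v) =
      shuffleSum k (fun w => f (a :: w)) u (b :: v) +
        shuffleSum k (fun w => f (b :: w)) (a :: u) v := by
  simp only [shuffleSum, shW, map_add, linearCombination_mapDomain]
  rfl

theorem shuffleSum_add (f g : List Ω → M) (u v : List Ω) :
    shuffleSum k (fun w => f w + g w) u v = shuffleSum k f u v + shuffleSum k g u v := by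
  simp [shuffleSum, linearCombination_apply, smul_add, sum_add]

theorem map_shuffleSum (T : M →ₗ[k] N) (f : List Ω → M) (u v : List Ω) :
    T (shuffleSum k f u v) = shuffleSum k (fun w => T (f w)) u v := by
  simp [shuffleSum, linearCombination_apply, map_finsuppSum]

theorem shuffleSum_splitSum (f : List Ω → List Ω → M) (u v : List Ω) :
    shuffleSum k (splitSum f) u v =
      splitSum (fun p q => splitSum (fun p' q' =>
        shuffleSum k (fun r => shuffleSum k (f r) q q') p p') v) u := by
  induction u generalizing f v with
  | nil => simp only [splitSum_nil, shuffleSum_nil_left]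
  | cons a u ihu =>
    induction v generalizing f with
    | nil => simp only [splitSum_nil, shuffleSum_nil_right]
    | cons b v ihv =>
      rw [shuffleSum_cons_cons]
      simp only [splitSum_cons, shuffleSum_add]
      rw [ihu fun p => f (a :: p), ihv fun p => f (b :: p)]
      simp only [splitSum_cons, splitSum_add, shuffleSum_nil_left, shuffleSum_nil_right,
        shuffleSum_cons_cons]
      abel

theorem shuffleSum_of_perm {f : List Ω → M} (hf : ∀ {w w' : List Ω}, w.Perm w' → f w = f w')
    (u v : List Ω) :
    shuffleSum k f u v = (u.length + v.length).choose u.length • f (u ++ v) := by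
  induction u generalizing f v with
  | nil => simp [shuffleSum_nil_left]
  | cons a u ihu =>
    induction v generalizing f with
    | nil => simp [shuffleSum_nil_right]
    | cons b v ihv =>
      have pascal : (u.length + (v.length + 1)).choose u.length +
          (u.length + 1 + v.length).choose (u.length + 1) =
          (u.length + 1 + (v.length + 1)).choose (u.length + 1) := by
        rw [← add_assoc, Nat.add_right_comm u.length 1 v.length, ← Nat.choose_succ_succ]
        congr 1
        omega
      have middle : f (b :: (a :: u ++ v)) = f (a :: u ++ b :: v) := hf List.perm_middle.symm
      rw [shuffleSum_cons_cons, ihu fun h => hf (h.cons a), ihv fun h => hf (h.cons b), middle,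
        List.cons_append, ← add_smul, List.length_cons, List.length_cons, pascal]

end Shuffle

section Block

/-- Left concatenation `w ↦ a w` by a letter. -/
def consLetter (a : Ω) : HW k Ω →ₗ[k] HW k Ω :=
  lmapDomain k k (a :: ·)

theorem consLetter_single (a : Ω) (w : List Ω) (c : k) :
    consLetter k a (single w c) = single (a :: w) c := by
  simp [consLetter]

/-- The weight of a block of length `n` in `êxp`: the coefficient of `tⁿ` in `exp t - 1`. -/
def blockWeight (n : ℕ) : k :=
  if n = 0 then 0 else (n.factorial : k)⁻¹

theorem choose_mul_blockWeight [CharZero k] {m n : ℕ} (hm : m ≠ 0) (hn : n ≠ 0) :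
    ((m + n).choose m : k) * blockWeight k (m + n) = blockWeight k m * blockWeight k n := by
  have hm_fact : (m.factorial : k) ≠ 0 := Nat.cast_ne_zero.2 m.factorial_ne_zero
  have hn_fact : (n.factorial : k) ≠ 0 := Nat.cast_ne_zero.2 n.factorial_ne_zero
  have hmn_fact : ((m + n).factorial : k) ≠ 0 := Nat.cast_ne_zero.2 (m + n).factorial_ne_zero
  have hmn : m + n ≠ 0 := by omega
  rw [Nat.cast_add_choose, blockWeight, blockWeight, blockWeight, if_neg hm, if_neg hn, if_neg hmn]
  field_simp

variable [Inhabited Ω] (Θ : Ω → Ω → Ω)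

/-- Left concatenation by the letter `Θ(p)`, weighted by `1 / |p|!`; zero on the empty block,
where `contract` is a junk value. -/
def consBlock (p : List Ω) : HW k Ω →ₗ[k] HW k Ω :=
  blockWeight k p.length • consLetter k (contract Θ p)

theorem consBlock_nil : consBlock k Θ [] = 0 := by
  simp [consBlock, blockWeight]

variable {Θ}

theorem contract_perm (hcomm : ∀ a b : Ω, Θ a b = Θ b a)
    (hassoc : ∀ a b c : Ω, Θ (Θ a b) c = Θ a (Θ b c)) {w w' : List Ω} (h : w.Perm w') :
    contract Θ w = contract Θ w' := by
  have : RightCommutative Θ := ⟨fun a b c => by rw [hassoc, hcomm b, hassoc]⟩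
  induction h with
  | nil => rfl
  | cons a h => exact h.foldl_eq _
  | swap a b l => simp [contract, hcomm]
  | trans _ _ h₁ h₂ => exact h₁.trans h₂

theorem contract_append (hassoc : ∀ a b c : Ω, Θ (Θ a b) c = Θ a (Θ b c)) {p q : List Ω}
    (hp : p ≠ []) (hq : q ≠ []) : contract Θ (p ++ q) = Θ (contract Θ p) (contract Θ q) := by
  have : Std.Associative Θ := ⟨hassoc⟩
  obtain ⟨a, p, rfl⟩ := List.exists_cons_of_ne_nil hp
  obtain ⟨b, q, rfl⟩ := List.exists_cons_of_ne_nil hq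
  simp [contract, List.foldl_assoc]

theorem consBlock_perm (hcomm : ∀ a b : Ω, Θ a b = Θ b a)
    (hassoc : ∀ a b c : Ω, Θ (Θ a b) c = Θ a (Θ b c)) {w w' : List Ω} (h : w.Perm w') :
    consBlock k Θ w = consBlock k Θ w' := by
  rw [consBlock, consBlock, h.length_eq, contract_perm hcomm hassoc h]

theorem choose_nsmul_consBlock_append [CharZero k]
    (hassoc : ∀ a b c : Ω, Θ (Θ a b) c = Θ a (Θ b c)) {p q : List Ω} (hp : p ≠ []) (hq : q ≠ []) :
    (p.length + q.length).choose p.length • consBlock k Θ (p ++ q) =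
      (blockWeight k p.length * blockWeight k q.length) •
        consLetter k (Θ (contract Θ p) (contract Θ q)) := by
  rw [consBlock, List.length_append, contract_append hassoc hp hq, ← Nat.cast_smul_eq_nsmul k,
    smul_smul, choose_mul_blockWeight k (by simpa using hp) (by simpa using hq)]

end Block

section Recursion

/-- The composition of `n + 1` with first block `i + 1 ≤ n + 1` and remaining blocks `c`. -/
def consComposition {n : ℕ} (i : Fin (n + 1)) (c : Composition (n - i)) : Composition (n + 1) where
  blocks := (i + 1) :: c.blocks
  blocks_pos hj := (List.mem_cons.1 hj).elim (fun h => h ▸ Nat.succ_pos _) c.blocks_pos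
  blocks_sum := by rw [List.sum_cons, c.blocks_sum]; omega

theorem consComposition_bijective (n : ℕ) :
    Function.Bijective fun x : (i : Fin (n + 1)) × Composition (n - i) =>
      consComposition x.1 x.2 := by
  constructor
  · rintro ⟨i, c⟩ ⟨j, d⟩ h
    have h := congrArg Composition.blocks h
    simp only [consComposition, List.cons.injEq, Nat.add_right_cancel_iff] at h
    obtain rfl := Fin.ext h.1
    obtain rfl := Composition.ext h.2
    rfl
  · rintro ⟨blocks, hpos, hsum⟩
    rcases blocks with _ | ⟨_ | i, l⟩
    · simp at hsum
    · exact absurd (hpos List.mem_cons_self) (lt_irrefl 0)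
    · rw [List.sum_cons] at hsum
      have hl : l.sum = n - i := by omega
      exact ⟨⟨⟨i, by omega⟩, ⟨l, fun h => hpos (List.mem_cons_of_mem _ h), hl⟩⟩, rfl⟩

theorem sum_composition_succ {M : Type*} [AddCommMonoid M] {n : ℕ}
    (F : Composition (n + 1) → M) :
    ∑ c, F c = ∑ i : Fin (n + 1), ∑ c : Composition (n - i), F (consComposition i c) := by
  rw [← (consComposition_bijective n).sum_comp, Fintype.sum_sigma]

variable [Inhabited Ω] (Θ : Ω → Ω → Ω)

theorem expL_single (w : List Ω) : expL k Θ (single w 1) = expW k Θ w := by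
  simp [expL]

theorem expW_nil : expW k Θ [] = single [] 1 := by
  have blocks_eq (c : Composition ([] : List Ω).length) : c.blocks = [] := c.blocks_eq_nil.2 rfl
  simp [expW, List.splitWrtComposition, List.splitWrtCompositionAux, blocks_eq, composition_card]

theorem expW_cons (a : Ω) (w : List Ω) :
    expW k Θ (a :: w) = splitSum (fun p q => consBlock k Θ (a :: p) (expW k Θ q)) w := by
  rw [splitSum, Finset.sum_range]
  refine (sum_composition_succ _).trans (Finset.sum_congr rfl fun i _ => ?_)
  have hi : (i : ℕ) ≤ w.length := Nat.lt_succ_iff.1 i.2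
  rw [expW, List.length_drop, map_sum]
  refine Finset.sum_congr rfl fun c _ => ?_
  simp [List.splitWrtComposition, List.splitWrtCompositionAux, consComposition, consBlock,
    blockWeight, consLetter_single, hi, mul_comm]

theorem expW_cons_eq_splitSum (a : Ω) (w : List Ω) :
    expW k Θ (a :: w) = splitSum (fun p q => consBlock k Θ p (expW k Θ q)) (a :: w) := by
  rw [expW_cons, splitSum_cons, consBlock_nil, LinearMap.zero_apply, zero_add]

end Recursion

section Bijective

theorem bijective_of_sub_self_mem {R M : Type*} [Ring R] [AddCommGroup M] [Module R M]
    {S : ℕ → Submodule R M} (hS_zero : S 0 = ⊥) (hS : ∀ x, ∃ n, x ∈ S n) {T : M →ₗ[R] M}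
    (hT : ∀ n, ∀ x ∈ S (n + 1), T x - x ∈ S n) : Function.Bijective T := by
  constructor
  · rw [injective_iff_map_eq_zero]
    intro x hx
    obtain ⟨n, hn⟩ := hS x
    induction n with
    | zero => simpa [hS_zero] using hn
    | succ n ih => exact ih (by simpa [hx] using hT n x hn)
  · intro x
    obtain ⟨n, hn⟩ := hS x
    induction n generalizing x with
    | zero => exact ⟨0, by simpa [hS_zero, eq_comm] using hn⟩
    | succ n ih =>
      obtain ⟨y, hy⟩ := ih _ (hT n x hn)
      exact ⟨x - y, by rw [map_sub, hy, sub_sub_cancel]⟩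

variable (Ω) in
/-- The span of the words of length less than `n`. -/
def shortWords (n : ℕ) : Submodule k (HW k Ω) :=
  supported k k {w : List Ω | w.length < n}

theorem exists_mem_shortWords (x : HW k Ω) : ∃ n, x ∈ shortWords k Ω n :=
  ⟨x.support.sup List.length + 1, fun _ hw =>
    Nat.lt_succ_of_le (Finset.le_sup (f := List.length) hw)⟩

variable [Inhabited Ω] (Θ : Ω → Ω → Ω)

theorem map_contract_splitWrtComposition_ones (w : List Ω) :
    (w.splitWrtComposition (Composition.ones w.length)).map (contract Θ) = w := by
  have singletons : w.splitWrtComposition (Composition.ones w.length) = w.map ([·]) := by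
    rw [List.splitWrtComposition, Composition.ones_blocks]
    induction w with
    | nil => rfl
    | cons a w ih => simpa [List.replicate_succ, List.splitWrtCompositionAux] using ih
  simp [singletons, contract, Function.comp_def]

theorem expW_sub_single_mem_shortWords (w : List Ω) :
    expW k Θ w - single w 1 ∈ shortWords k Ω w.length := by
  have hones : (((Composition.ones w.length).blocks.map Nat.factorial).prod : k)⁻¹ •
      single ((w.splitWrtComposition (Composition.ones w.length)).map (contract Θ)) (1 : k) =
      single w 1 := by
    simp [map_contract_splitWrtComposition_ones]
  rw [expW, ← Finset.add_sum_erase _ _ (Finset.mem_univ (Composition.ones w.length)), hones,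
    add_sub_cancel_left]
  refine sum_mem fun c hc => Submodule.smul_mem _ _ (single_mem_supported k _ ?_)
  have fewer_blocks : c.length < w.length :=
    not_le.1 (mt Composition.eq_ones_iff_le_length.2 (Finset.ne_of_mem_erase hc))
  simpa using fewer_blocks

theorem expL_sub_self_mem_shortWords (n : ℕ) (x : HW k Ω) (hx : x ∈ shortWords k Ω (n + 1)) :
    expL k Θ x - x ∈ shortWords k Ω n := by
  suffices shortWords k Ω (n + 1) ≤ (shortWords k Ω n).comap (expL k Θ - LinearMap.id) from this hx
  rw [shortWords, supported_eq_span_single, Submodule.span_le]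
  rintro _ ⟨w, hw, rfl⟩
  have hmono : shortWords k Ω w.length ≤ shortWords k Ω n :=
    supported_mono fun _ h => lt_of_lt_of_le h (Nat.lt_succ_iff.1 hw)
  have := hmono (expW_sub_single_mem_shortWords k Θ w)
  simpa [expL_single] using this

theorem expL_bijective : Function.Bijective (expL k Θ) :=
  bijective_of_sub_self_mem (by simp [shortWords]) (exists_mem_shortWords k)
    (expL_sub_self_mem_shortWords k Θ)

end Bijective

section Coalgebra

theorem deconcat_single (w : List Ω) :
    deconcat k (single w 1) =
      splitSum (fun p q => (single q 1 : HW k Ω) ⊗ₜ[k] (single p 1 : HW k Ω)) w := by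
  simp [deconcat, splitSum]

theorem deconcat_consLetter (a : Ω) (x : HW k Ω) :
    deconcat k (consLetter k a x) =
      consLetter k a x ⊗ₜ[k] single [] 1 + (consLetter k a).lTensor (HW k Ω) (deconcat k x) := by
  suffices deconcat k ∘ₗ consLetter k a =
      (TensorProduct.mk k (HW k Ω) (HW k Ω)).flip (single [] 1) ∘ₗ consLetter k a +
        (consLetter k a).lTensor (HW k Ω) ∘ₗ deconcat k from LinearMap.congr_fun this x
  ext w : 2
  simp [consLetter_single, deconcat_single, splitSum_cons, map_splitSum]

theorem counitW_single_cons (a : Ω) (w : List Ω) : counitW k (single (a :: w) 1) = 0 := by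
  simp [counitW]

theorem counitW_consLetter (a : Ω) (x : HW k Ω) : counitW k (consLetter k a x) = 0 := by
  suffices counitW k ∘ₗ consLetter k a = 0 from LinearMap.congr_fun this x
  ext w
  simp [consLetter_single, counitW_single_cons]

variable [Inhabited Ω] (Θ : Ω → Ω → Ω)

theorem deconcat_consBlock (p : List Ω) (x : HW k Ω) :
    deconcat k (consBlock k Θ p x) =
      consBlock k Θ p x ⊗ₜ[k] single [] 1 + (consBlock k Θ p).lTensor (HW k Ω) (deconcat k x) := by
  simp only [consBlock, LinearMap.smul_apply, map_smul, deconcat_consLetter,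
    LinearMap.lTensor_smul, smul_add, TensorProduct.smul_tmul']

theorem deconcat_expW (w : List Ω) :
    deconcat k (expW k Θ w) = splitSum (fun p q => expW k Θ q ⊗ₜ[k] expW k Θ p) w := by
  induction h : w.length using Nat.strong_induction_on generalizing w with
  | _ n ih =>
  subst h
  rcases w with _ | ⟨a, w⟩
  · rw [expW_nil, deconcat_single, splitSum_nil, splitSum_nil, expW_nil]
  calc deconcat k (expW k Θ (a :: w))
    _ = splitSum (fun p q => deconcat k (consBlock k Θ (a :: p) (expW k Θ q))) w := by
      rw [expW_cons, map_splitSum]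
    _ = splitSum (fun p q => consBlock k Θ (a :: p) (expW k Θ q) ⊗ₜ[k] single [] 1 +
          splitSum (fun r t => expW k Θ t ⊗ₜ[k] consBlock k Θ (a :: p) (expW k Θ r)) q) w := by
      refine splitSum_congr fun p q hpq => ?_
      rw [deconcat_consBlock, ih q.length (by simp [← hpq]) q rfl, map_splitSum]
      simp only [LinearMap.lTensor_tmul]
    _ = expW k Θ (a :: w) ⊗ₜ[k] expW k Θ [] +
          splitSum (fun r t => expW k Θ t ⊗ₜ[k] expW k Θ (a :: r)) w := by
      rw [splitSum_add, splitSum_assoc]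
      simp only [expW_nil, expW_cons, splitSum, TensorProduct.sum_tmul, TensorProduct.tmul_sum]
    _ = splitSum (fun p q => expW k Θ q ⊗ₜ[k] expW k Θ p) (a :: w) :=
      (splitSum_cons (fun p q => expW k Θ q ⊗ₜ[k] expW k Θ p) a w).symm

theorem deconcat_expL (x : HW k Ω) :
    deconcat k (expL k Θ x) = TensorProduct.map (expL k Θ) (expL k Θ) (deconcat k x) := by
  suffices deconcat k ∘ₗ expL k Θ = TensorProduct.map (expL k Θ) (expL k Θ) ∘ₗ deconcat k from
    LinearMap.congr_fun this x
  ext w : 2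
  simp [expL_single, deconcat_expW, deconcat_single, map_splitSum]

theorem counitW_expL (x : HW k Ω) : counitW k (expL k Θ x) = counitW k x := by
  suffices counitW k ∘ₗ expL k Θ = counitW k from LinearMap.congr_fun this x
  ext w
  cases w with
  | nil => simp [expL_single, expW_nil]
  | cons a w =>
    have counitW_expW : counitW k (expW k Θ (a :: w)) = 0 := by
      rw [expW_cons, map_splitSum]
      simp only [consBlock, LinearMap.smul_apply, map_smul, counitW_consLetter, smul_zero,
        splitSum, Finset.sum_const_zero]
    simpa [expL_single, counitW_expW] using (counitW_single_cons k a w).symm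

end Coalgebra

section Multiplicative

variable (Θ : Ω → Ω → Ω)

theorem shL_single (u v : List Ω) : shL k (single u 1) (single v 1) = shW k u v := by
  simp [shL]

theorem qshL_single (u v : List Ω) : qshL k Θ (single u 1) (single v 1) = qshW k Θ u v := by
  simp [qshL]

theorem qshL_nil_left (x : HW k Ω) : qshL k Θ (single [] 1) x = x := by
  suffices qshL k Θ (single [] 1) = LinearMap.id from LinearMap.congr_fun this x
  ext w : 2
  simp [qshL_single, qshW]

theorem qshL_nil_right (x : HW k Ω) : qshL k Θ x (single [] 1) = x := by
  suffices (qshL k Θ).flip (single [] 1) = LinearMap.id from LinearMap.congr_fun this x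
  ext w : 2
  cases w <;> simp [qshL_single, qshW]

theorem qshL_consLetter (a b : Ω) (x y : HW k Ω) :
    qshL k Θ (consLetter k a x) (consLetter k b y) =
      consLetter k a (qshL k Θ x (consLetter k b y)) +
      consLetter k b (qshL k Θ (consLetter k a x) y) +
      consLetter k (Θ a b) (qshL k Θ x y) := by
  suffices (qshL k Θ).compl₁₂ (consLetter k a) (consLetter k b) =
      ((qshL k Θ).compl₂ (consLetter k b)).compr₂ (consLetter k a) +
      ((qshL k Θ).comp (consLetter k a)).compr₂ (consLetter k b) +
      (qshL k Θ).compr₂ (consLetter k (Θ a b)) from LinearMap.congr_fun₂ this x y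
  ext u v : 4
  simp [consLetter, qshL_single, qshW]

variable [Inhabited Ω] {Θ}

theorem qshL_consBlock [CharZero k] (hassoc : ∀ a b c : Ω, Θ (Θ a b) c = Θ a (Θ b c))
    {p q : List Ω} (hp : p ≠ []) (hq : q ≠ []) (x y : HW k Ω) :
    qshL k Θ (consBlock k Θ p x) (consBlock k Θ q y) =
      consBlock k Θ p (qshL k Θ x (consBlock k Θ q y)) +
      consBlock k Θ q (qshL k Θ (consBlock k Θ p x) y) +
      (p.length + q.length).choose p.length • consBlock k Θ (p ++ q) (qshL k Θ x y) := by
  rw [← LinearMap.smul_apply, choose_nsmul_consBlock_append k hassoc hp hq]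
  simp only [consBlock, LinearMap.smul_apply, map_smul, qshL_consLetter, smul_add, smul_smul,
    mul_comm]

theorem shuffleSum_expW_cons_cons (hcomm : ∀ a b : Ω, Θ a b = Θ b a)
    (hassoc : ∀ a b c : Ω, Θ (Θ a b) c = Θ a (Θ b c)) (a b : Ω) (u v : List Ω) :
    shuffleSum k (expW k Θ) (a :: u) (b :: v) =
      splitSum (fun p q => splitSum (fun p' q' => (p.length + p'.length).choose p.length •
        consBlock k Θ (p ++ p') (shuffleSum k (expW k Θ) q q')) (b :: v)) (a :: u) := by
  rw [shuffleSum_cons_cons]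
  simp only [expW_cons_eq_splitSum]
  rw [← shuffleSum_cons_cons, shuffleSum_splitSum]
  simp only [← map_shuffleSum]
  exact splitSum_congr fun p q _ => splitSum_congr fun p' q' _ =>
    shuffleSum_of_perm k (fun h => by rw [consBlock_perm k hcomm hassoc h]) p p'

theorem qshL_expW_cons_cons [CharZero k] (hassoc : ∀ a b c : Ω, Θ (Θ a b) c = Θ a (Θ b c))
    (a b : Ω) (u v : List Ω) :
    qshL k Θ (expW k Θ (a :: u)) (expW k Θ (b :: v)) =
      splitSum (fun p q => splitSum (fun p' q' => (p.length + p'.length).choose p.length •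
        consBlock k Θ (p ++ p') (qshL k Θ (expW k Θ q) (expW k Θ q'))) (b :: v)) (a :: u) := by
  have expand_left (y : HW k Ω) : qshL k Θ (expW k Θ (a :: u)) y =
      splitSum (fun p q => qshL k Θ (consBlock k Θ (a :: p) (expW k Θ q)) y) u := by
    rw [expW_cons]
    exact map_splitSum ((qshL k Θ).flip y) _ _
  have expand_right (x : HW k Ω) : qshL k Θ x (expW k Θ (b :: v)) =
      splitSum (fun p' q' => qshL k Θ x (consBlock k Θ (b :: p') (expW k Θ q'))) v := by
    rw [expW_cons, map_splitSum]
  calc qshL k Θ (expW k Θ (a :: u)) (expW k Θ (b :: v))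
    _ = splitSum (fun p q => splitSum (fun p' q' =>
          consBlock k Θ (a :: p) (qshL k Θ (expW k Θ q) (consBlock k Θ (b :: p') (expW k Θ q'))) +
          consBlock k Θ (b :: p') (qshL k Θ (consBlock k Θ (a :: p) (expW k Θ q)) (expW k Θ q')) +
          ((a :: p).length + (b :: p').length).choose (a :: p).length •
            consBlock k Θ (a :: p ++ b :: p') (qshL k Θ (expW k Θ q) (expW k Θ q'))) v) u := by
      rw [expand_left]
      simp only [expand_right,
        qshL_consBlock k hassoc (List.cons_ne_nil a _) (List.cons_ne_nil b _)]
    _ = splitSum (fun p q => consBlock k Θ (a :: p)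
            (qshL k Θ (expW k Θ q) (expW k Θ (b :: v)))) u +
          splitSum (fun p' q' => consBlock k Θ (b :: p')
            (qshL k Θ (expW k Θ (a :: u)) (expW k Θ q'))) v +
          splitSum (fun p q => splitSum (fun p' q' =>
            ((a :: p).length + (b :: p').length).choose (a :: p).length •
              consBlock k Θ (a :: p ++ b :: p') (qshL k Θ (expW k Θ q) (expW k Θ q'))) v) u := by
      simp only [expand_left, expand_right, map_splitSum, splitSum_add]
      rw [splitSum_comm (fun p q p' q' => consBlock k Θ (b :: p') _) u v]
    _ = _ := by
      simp only [splitSum_cons, splitSum_add, List.nil_append, List.append_nil, consBlock_nil,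
        LinearMap.zero_apply, zero_add, List.length_nil, add_zero, Nat.choose_zero_right,
        Nat.choose_self, one_smul]
      abel

theorem shuffleSum_expW [CharZero k] (hcomm : ∀ a b : Ω, Θ a b = Θ b a)
    (hassoc : ∀ a b c : Ω, Θ (Θ a b) c = Θ a (Θ b c)) (u v : List Ω) :
    shuffleSum k (expW k Θ) u v = qshL k Θ (expW k Θ u) (expW k Θ v) := by
  induction h : u.length + v.length using Nat.strong_induction_on generalizing u v with
  | _ n ih =>
  rcases u with _ | ⟨a, u⟩
  · rw [shuffleSum_nil_left, expW_nil, qshL_nil_left]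
  rcases v with _ | ⟨b, v⟩
  · rw [shuffleSum_nil_right, expW_nil, qshL_nil_right]
  rw [shuffleSum_expW_cons_cons k hcomm hassoc, qshL_expW_cons_cons k hassoc]
  refine splitSum_congr fun p q hpq => splitSum_congr fun p' q' hpq' => ?_
  by_cases hp : p ++ p' = []
  · simp only [hp, consBlock_nil, LinearMap.zero_apply]
  have hlength : q.length + q'.length < n := by
    have := List.length_pos_iff.2 hp
    rw [← h, ← hpq, ← hpq']
    simp only [List.length_append] at this ⊢
    omega
  rw [ih _ hlength q q' rfl]

theorem expL_shL [CharZero k] (hcomm : ∀ a b : Ω, Θ a b = Θ b a)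
    (hassoc : ∀ a b c : Ω, Θ (Θ a b) c = Θ a (Θ b c)) (x y : HW k Ω) :
    expL k Θ (shL k x y) = qshL k Θ (expL k Θ x) (expL k Θ y) := by
  suffices (shL k).compr₂ (expL k Θ) = (qshL k Θ).compl₁₂ (expL k Θ) (expL k Θ) from
    LinearMap.congr_fun₂ this x y
  ext u v : 4
  have expL_shW : expL k Θ (shW k u v) = shuffleSum k (expW k Θ) u v := by
    simp [expL, shuffleSum, linearCombination_apply]
  simpa [shL_single, expL_single, expL_shW] using shuffleSum_expW k hcomm hassoc u v

end Multiplicative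

end QuasiShuffle

/-- **Hoffman's isomorphism.**  Over a field `k` of characteristic zero and for a
commutative associative operation `Θ` on the alphabet, the map `êxp` is an
isomorphism of Hopf algebras from the shuffle Hopf algebra
`(H_W, ⧢, ∅, Δ, δ_∅)` to the quasi-shuffle Hopf algebra `(H_W, ⧢_Θ, ∅, Δ, δ_∅)`:
it is a linear bijection, sends the empty word to the empty word, intertwines the
shuffle and quasi-shuffle products, and commutes with the deconcatenation
coproduct and the counit. -/
theorem hoffman_exp_hopf_iso
    (k : Type*) [Field k] [CharZero k] (Ω : Type*) [Inhabited Ω]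
    (Θ : Ω → Ω → Ω)
    (hcomm : ∀ a b : Ω, Θ a b = Θ b a)
    (hassoc : ∀ a b c : Ω, Θ (Θ a b) c = Θ a (Θ b c)) :
    Function.Bijective (expL k Θ) ∧
    expL k Θ (Finsupp.single ([] : List Ω) (1 : k)) = Finsupp.single [] 1 ∧
    (∀ x y : HW k Ω, expL k Θ (shL k x y) = qshL k Θ (expL k Θ x) (expL k Θ y)) ∧
    (∀ x : HW k Ω,
      deconcat k (expL k Θ x) =
        TensorProduct.map (expL k Θ) (expL k Θ) (deconcat k x)) ∧
    (∀ x : HW k Ω, counitW k (expL k Θ x) = counitW k x) := by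
  refine ⟨QuasiShuffle.expL_bijective k Θ, ?_, QuasiShuffle.expL_shL k hcomm hassoc,
    QuasiShuffle.deconcat_expL k Θ, QuasiShuffle.counitW_expL k Θ⟩
  rw [QuasiShuffle.expL_single, QuasiShuffle.expW_nil]
end
end
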